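/- Let r ≥ 2, let a ≥ 1, and let 1 ≤ d_1 ≤ ⋯ ≤ d_{r+a−1} be integers. Let Z ⊆ W_{r,d_1}×⋯×W_{r,d_{r+a−1}} be the set of tuples (F_1,…,F_{r+a−1}) with dim V(F_1,…,F_{r+a−1}) ≥ 1, let D be the set of tuples with dim V(F_1,…,F_{r+a−2}) ≥ 2, and let L be the set of tuples (F_1,…,F_{r+a−1}) such that V(F_1,…,F_{r+a−1}) contains a line of ℙ^r. Then the Zariski closure of Z \ D has a unique irreducible component of maximal dimension, and this component equals L; in particular, that component consists of tuples of homogeneous forms all vanishing on some common line. -/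

import Mathlib

open MvPolynomial

noncomputable section

variable (K : Type*) [Field K] (M : Type*) [AddCommGroup M] [Module K M]

/-- Evaluation of a polynomial in the linear functionals of `M` at a point `v : M`.
These are precisely the polynomial functions on the affine space `M`. -/
def polyEval (p : MvPolynomial (M →ₗ[K] K) K) (v : M) : K :=
  MvPolynomial.eval (fun φ : M →ₗ[K] K => φ v) p

lemma polyEval_mul (p q : MvPolynomial (M →ₗ[K] K) K) (v : M) :
    polyEval K M (p * q) v = polyEval K M p v * polyEval K M q v :=
  map_mul (MvPolynomial.eval fun φ : M →ₗ[K] K => φ v) p q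

/-- The collection of Zariski-closed subsets of the affine space `M`:
common zero loci of families of polynomial functions. -/
def zariskiCloseds : Set (Set M) :=
  {s | ∃ S : Set (MvPolynomial (M →ₗ[K] K) K), s = {v | ∀ p ∈ S, polyEval K M p v = 0}}

/-- The Zariski topology on an affine space (vector space) `M` over `K`. -/
def zariskiTopology : TopologicalSpace M := by
  refine TopologicalSpace.ofClosed (zariskiCloseds K M) ⟨{1}, ?_⟩ ?_ ?_
  · ext v
    simp [polyEval]
  · intro A hA
    choose S hS using fun a : A => hA a.2
    refine ⟨⋃ a : A, S a, ?_⟩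
    ext v
    simp only [Set.mem_sInter, Set.mem_setOf_eq, Set.mem_iUnion]
    constructor
    · rintro h p ⟨a, hp⟩
      have := h a a.2
      rw [hS a] at this
      exact this p hp
    · intro h t ht
      have : v ∈ {w | ∀ p ∈ S ⟨t, ht⟩, polyEval K M p w = 0} :=
        fun p hp => h p ⟨⟨t, ht⟩, hp⟩
      rw [← hS ⟨t, ht⟩] at this
      exact this
  · rintro s ⟨S₁, rfl⟩ t ⟨S₂, rfl⟩
    refine ⟨Set.image2 (· * ·) S₁ S₂, ?_⟩
    ext v
    simp only [Set.mem_union, Set.mem_setOf_eq]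
    constructor
    · rintro (h | h) p ⟨p₁, h₁, p₂, h₂, rfl⟩
      · show polyEval K M (p₁ * p₂) v = 0
        rw [polyEval_mul, h p₁ h₁, zero_mul]
      · show polyEval K M (p₁ * p₂) v = 0
        rw [polyEval_mul, h p₂ h₂, mul_zero]
    · intro h
      by_contra hc
      push_neg at hc
      obtain ⟨⟨p₁, h₁, hv₁⟩, ⟨p₂, h₂, hv₂⟩⟩ := hc
      have h12 := h (p₁ * p₂) ⟨p₁, h₁, p₂, h₂, rfl⟩
      rw [polyEval_mul] at h12
      exact mul_ne_zero hv₁ hv₂ h12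

/-- The dimension of a subset of affine space: the Krull dimension of its Zariski closure. -/
def dimSet {M : Type*} [TopologicalSpace M] (s : Set M) : WithBot ℕ∞ :=
  topologicalKrullDim ↥(closure s)

/-- `vdimGE r n F m` says that the common projective vanishing locus
`V(F 0, …, F (n-1)) ⊆ ℙ^r` has dimension at least `m` (with `dim ∅ = -∞`).
This is encoded via the Krull dimension of the homogeneous coordinate ring of the
affine cone: `dim V(F) ≥ m` iff the cone has Krull dimension at least `max m 0 + 1`. -/
def vdimGE {K : Type*} [Field K] (r n : ℕ) (F : Fin n → MvPolynomial (Fin (r + 1)) K)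
    (m : ℤ) : Prop :=
  ((m.toNat + 1 : ℕ) : WithBot ℕ∞) ≤
    ringKrullDim (MvPolynomial (Fin (r + 1)) K ⧸ Ideal.span (Set.range F))

end

noncomputable section Statement1

open MvPolynomial

variable (K : Type*) [Field K]

/-- The affine space `W_{r, d 0} × ⋯ × W_{r, d (n-1)}` of `n`-tuples of homogeneous
forms of degrees `d 0, …, d (n-1)` in the variables `x_0, …, x_r`. -/
abbrev tupleSpace (r n : ℕ) (d : Fin n → ℕ) : Type _ :=
  (i : Fin n) → ↥(homogeneousSubmodule (Fin (r + 1)) K (d i))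

/-- The Zariski topology on the affine space of tuples of forms. -/
instance (r n : ℕ) (d : Fin n → ℕ) : TopologicalSpace (tupleSpace K r n d) :=
  zariskiTopology K _

/-- The forms `F 0, …, F (n-1)` all vanish on a common line of `ℙ^r`. -/
def vanishOnCommonLine {r n : ℕ} {d : Fin n → ℕ} (F : tupleSpace K r n d) : Prop :=
  ∃ v w : Fin (r + 1) → K, LinearIndependent K ![v, w] ∧
    ∀ i : Fin n, ∀ s t : K,
      MvPolynomial.eval (fun j => s * v j + t * w j) (F i : MvPolynomial (Fin (r + 1)) K) = 0

end Statement1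

open MvPolynomial
noncomputable section
namespace TL

/-! ### Linear Cauchy-Davenport over an algebraically closed field -/

theorem hopf_aux {k L : Type*} [Field k] [Field L] [Algebra k L] [IsAlgClosed k] (N : ℕ) :
    ∀ (U V : Submodule k L) [FiniteDimensional k U] [FiniteDimensional k V], U ≠ ⊥ →
      (1 : L) ∈ V → Module.finrank k V ≤ N →
      Module.finrank k U + Module.finrank k V ≤ Module.finrank k ↥(U * V) + 1 := by
  induction N with
  | zero =>
    intro U V _ _ _ h1 hN
    exfalso
    have : V = ⊥ := Submodule.finrank_eq_zero.mp (Nat.le_zero.mp hN)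
    rw [this] at h1
    simp at h1
  | succ N ih =>
    intro U V _ _ hU h1 hN
    by_cases hall : ∀ e ∈ U, ∀ v ∈ V, e * v ∈ U
    · have hV : V = 1 := by
        apply le_antisymm
        · intro v hv
          have hint : IsIntegral k v := by
            refine isIntegral_of_smul_mem_submodule U hU ?_ v ?_
            · exact Module.Finite.iff_fg.mp inferInstance
            · intro n hn
              rw [smul_eq_mul, mul_comm]
              exact hall n hn v hv
          have hr := minpoly.mem_range_of_degree_eq_one k v
            (IsAlgClosed.degree_eq_one_of_irreducible k (minpoly.irreducible hint))
          obtain ⟨c, rfl⟩ := hr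
          exact Submodule.algebraMap_mem c
        · rw [Submodule.one_le]
          exact h1
      subst hV
      have hf : Module.finrank k ↥(1 : Submodule k L) = 1 := by
        rw [Submodule.one_eq_span]
        exact finrank_span_singleton one_ne_zero
      rw [mul_one, hf]
    · push Not at hall
      obtain ⟨e, he, v, hv, hev⟩ := hall
      have he0 : e ≠ 0 := by
        rintro rfl
        apply hev
        simp
      let μ : L →ₗ[k] L := LinearMap.mulLeft k e
      have hμ : Function.Injective μ := by
        intro a b hab
        exact mul_left_cancel₀ he0 hab
      obtain ⟨U', hU'⟩ : ∃ U', U' = U ⊔ V.map μ := ⟨_, rfl⟩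
      have : FiniteDimensional k U' := by rw [hU']; infer_instance
      set V' := V ⊓ U.comap μ with hV'
      have : FiniteDimensional k V' := Submodule.finiteDimensional_inf_left _ _
      have hmap : V'.map μ = U ⊓ V.map μ := by
        ext x
        simp only [hV', Submodule.mem_map, Submodule.mem_inf, Submodule.mem_comap]
        constructor
        · rintro ⟨y, ⟨hy1, hy2⟩, rfl⟩
          exact ⟨hy2, y, hy1, rfl⟩
        · rintro ⟨hx, y, hy, rfl⟩
          exact ⟨y, ⟨hy, hx⟩, rfl⟩
      have hdim := Submodule.finrank_sup_add_finrank_inf_eq U (V.map μ)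
      rw [← hmap] at hdim
      have e1 : Module.finrank k ↥(V'.map μ) = Module.finrank k V' :=
        (Submodule.equivMapOfInjective μ hμ V').finrank_eq.symm
      have e2 : Module.finrank k ↥(V.map μ) = Module.finrank k V :=
        (Submodule.equivMapOfInjective μ hμ V).finrank_eq.symm
      rw [e1, e2] at hdim
      have hlt : Module.finrank k V' < Module.finrank k V := by
        apply Submodule.finrank_lt_finrank_of_lt
        refine lt_of_le_of_ne inf_le_left ?_
        intro h
        apply hev
        have : v ∈ V' := by rw [h]; exact hv
        exact this.2
      have hUne : U' ≠ ⊥ := fun h => hU (le_bot_iff.mp (by rw [← h, hU']; exact le_sup_left))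
      have := ih U' V' hUne ⟨h1, by simpa [μ] using he⟩ (by omega)
      have hle : U' * V' ≤ U * V := by
        rw [hU', Submodule.sup_mul]
        refine sup_le (mul_le_mul' le_rfl inf_le_left) ?_
        rw [Submodule.mul_le]
        rintro _ ⟨m, hm, rfl⟩ n ⟨_, hn⟩
        have : μ m * n = μ n * m := by simp [μ]; ring
        rw [this]
        exact Submodule.mul_mem_mul hn hm
      have : FiniteDimensional k ↥(U * V) := by
        rw [FiniteDimensional, Module.Finite.iff_fg] at *
        exact Submodule.FG.mul ‹_› ‹_›
      have h3 := Submodule.finrank_mono hle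
      rw [← hU'] at hdim
      omega

theorem hopf {k L : Type*} [Field k] [Field L] [Algebra k L] [IsAlgClosed k]
    (U V : Submodule k L) [FiniteDimensional k U] [FiniteDimensional k V] (hU : U ≠ ⊥)
    (hV : V ≠ ⊥) :
    Module.finrank k U + Module.finrank k V ≤ Module.finrank k ↥(U * V) + 1 := by
  obtain ⟨v, hv, hv0⟩ := Submodule.exists_mem_ne_zero_of_ne_bot hV
  let μ : L →ₗ[k] L := LinearMap.mulLeft k v⁻¹
  have hμ : Function.Injective μ := by
    intro a b hab
    exact mul_left_cancel₀ (inv_ne_zero hv0) hab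
  have h := hopf_aux (Module.finrank k ↥(V.map μ)) U (V.map μ) hU
    ⟨v, hv, by simp [μ, inv_mul_cancel₀ hv0]⟩ le_rfl
  have e2 : Module.finrank k ↥(V.map μ) = Module.finrank k V :=
    (Submodule.equivMapOfInjective μ hμ V).finrank_eq.symm
  have e3 : U * V.map μ = (U * V).map μ := by
    apply le_antisymm
    · rw [Submodule.mul_le]
      rintro m hm _ ⟨n, hn, rfl⟩
      refine ⟨m * n, Submodule.mul_mem_mul hm hn, ?_⟩
      simp [μ]; ring
    · rw [Submodule.map_le_iff_le_comap, Submodule.mul_le]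
      intro m hm n hn
      have : μ (m * n) = m * μ n := by simp [μ]; ring
      rw [Submodule.mem_comap, this]
      exact Submodule.mul_mem_mul hm ⟨n, hn, rfl⟩
  have e4 : Module.finrank k ↥((U * V).map μ) = Module.finrank k ↥(U * V) :=
    (Submodule.equivMapOfInjective μ hμ _).finrank_eq.symm
  rw [e2, e3, e4] at h
  exact h

/-! ### Monomials and forms -/

/-- monomials of degree `d` -/
abbrev Mon (r d : ℕ) : Type := {m : Fin (r + 1) →₀ ℕ // m.degree = d}

instance (r d : ℕ) : Finite (Mon r d) := by
  have h : {m : Fin (r + 1) →₀ ℕ | m.degree ≤ d}.Finite := Finsupp.finite_of_degree_le d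
  exact (h.subset (fun m (hm : m.degree = d) => hm.le)).to_subtype

instance (r d : ℕ) : Fintype (Mon r d) := Fintype.ofFinite _

/-- coordinates of the homogeneous submodule -/
def homEquiv (k : Type*) [Field k] (r d : ℕ) :
    homogeneousSubmodule (Fin (r + 1)) k d ≃ₗ[k] (Mon r d → k) where
  toFun p m := coeff m.1 p.1
  map_add' p q := by ext m; simp
  map_smul' c p := by ext m; simp
  invFun y := ⟨∑ m : Mon r d, monomial m.1 (y m), by
    apply Submodule.sum_mem
    intro m _
    exact isHomogeneous_monomial _ m.2⟩
  left_inv p := by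
    ext m
    simp only [coeff_sum, coeff_monomial]
    by_cases hm : m.degree = d
    · rw [Finset.sum_eq_single ⟨m, hm⟩]
      · simp
      · intro b _ hb
        rw [if_neg]
        intro h
        exact hb (Subtype.ext h)
      · simp
    · rw [(show p.1.IsHomogeneous d from p.2).coeff_eq_zero hm]
      apply Finset.sum_eq_zero
      intro x _
      rw [if_neg]
      rintro rfl
      exact hm x.2
  right_inv y := by
    ext m
    simp only [coeff_sum, coeff_monomial]
    rw [Finset.sum_eq_single m]
    · simp
    · intro b _ hb
      rw [if_neg]
      intro h
      exact hb (Subtype.ext h)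
    · simp

instance (k : Type*) [Field k] (r d : ℕ) :
    FiniteDimensional k (homogeneousSubmodule (Fin (r + 1)) k d) :=
  Module.Finite.equiv (homEquiv k r d).symm

theorem finrank_hom (k : Type*) [Field k] (r d : ℕ) :
    Module.finrank k (homogeneousSubmodule (Fin (r + 1)) k d) = Fintype.card (Mon r d) := by
  rw [(homEquiv k r d).finrank_eq, Module.finrank_fintype_fun_eq_card]

/-- Hilbert function lower bound -/
theorem hilb {k : Type*} [Field k] [IsAlgClosed k] {r : ℕ}
    (p : Ideal (MvPolynomial (Fin (r + 1)) k)) [p.IsPrime] (I : Finset (Fin (r + 1))) (b : ℕ)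
    (hb : I.card = b + 1)
    (hI : LinearIndependent k (fun i : I => Ideal.Quotient.mkₐ k p (X i.1))) (d : ℕ) :
    b * d + 1 ≤ Module.finrank k ↥((homogeneousSubmodule (Fin (r + 1)) k d).map
      (Ideal.Quotient.mkₐ k p).toLinearMap) := by
  let L := FractionRing (MvPolynomial (Fin (r + 1)) k ⧸ p)
  let ψ : (MvPolynomial (Fin (r + 1)) k ⧸ p) →ₐ[k] L := IsScalarTower.toAlgHom k _ L
  have hψ : Function.Injective ψ := IsFractionRing.injective _ L
  let q : MvPolynomial (Fin (r + 1)) k →ₐ[k] L := ψ.comp (Ideal.Quotient.mkₐ k p)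
  let U : ℕ → Submodule k L := fun d => (homogeneousSubmodule (Fin (r + 1)) k d).map q.toLinearMap
  have hU : ∀ d, Module.finrank k ↥(U d) = Module.finrank k
      ↥((homogeneousSubmodule (Fin (r + 1)) k d).map (Ideal.Quotient.mkₐ k p).toLinearMap) := by
    intro d
    have : U d = ((homogeneousSubmodule (Fin (r + 1)) k d).map
      (Ideal.Quotient.mkₐ k p).toLinearMap).map ψ.toLinearMap := by
      rw [← Submodule.map_comp]; rfl
    rw [this]
    exact (Submodule.equivMapOfInjective ψ.toLinearMap hψ _).finrank_eq.symm
  rw [← hU]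
  have hfin : ∀ d, FiniteDimensional k (U d) := fun d => inferInstance
  have h1 : b + 1 ≤ Module.finrank k (U 1) := by
    have hli : LinearIndependent k (fun i : I => q (X i.1)) :=
      hI.map' ψ.toLinearMap (LinearMap.ker_eq_bot.mpr hψ)
    have := finrank_span_eq_card hli
    rw [Fintype.card_coe, hb] at this
    rw [← this]
    apply Submodule.finrank_mono
    rw [Submodule.span_le]
    rintro _ ⟨i, rfl⟩
    exact ⟨X i.1, isHomogeneous_X _ _, rfl⟩
  have hpos : ∀ d, 1 ≤ Module.finrank k (U d) → U d ≠ ⊥ := by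
    intro d hd h
    rw [h] at hd
    simp at hd
  induction d with
  | zero =>
    simp only [mul_zero, zero_add]
    rw [Nat.one_le_iff_ne_zero, Ne, Submodule.finrank_eq_zero]
    intro h
    have : (1 : L) ∈ U 0 := ⟨1, isHomogeneous_one _ _, by simp⟩
    rw [h] at this
    simp at this
  | succ d ih =>
    have hle : U d * U 1 ≤ U (d + 1) := by
      have : U d * U 1 = (homogeneousSubmodule (Fin (r + 1)) k d *
          homogeneousSubmodule (Fin (r + 1)) k 1).map q.toLinearMap :=
        (Submodule.map_mul _ _ q).symm
      rw [this]
      exact Submodule.map_mono (homogeneousSubmodule_mul d 1)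
    have := hopf (U d) (U 1) (hpos _ (by omega)) (hpos _ (by omega))
    have h3 := Submodule.finrank_mono hle
    rw [mul_add]
    omega

end TL

namespace TL
noncomputable section
open MvPolynomial

section descent
variable {k Ω : Type*} [Field k] [Field Ω] [Algebra k Ω] {σ : Type*}

/-- apply a linear functional coefficientwise -/
def lamF (l : Ω →ₗ[k] k) (h : MvPolynomial σ Ω) : MvPolynomial σ k :=
  ∑ m ∈ h.support, monomial m (l (coeff m h))

theorem coeff_lamF (l : Ω →ₗ[k] k) (h : MvPolynomial σ Ω) (m : σ →₀ ℕ) :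
    coeff m (lamF l h) = l (coeff m h) := by
  classical
  rw [lamF, coeff_sum]
  simp only [coeff_monomial]
  rw [Finset.sum_ite_eq']
  split_ifs with hm
  · rfl
  · rw [notMem_support_iff.mp hm, map_zero]

theorem lamF_add (l : Ω →ₗ[k] k) (h h' : MvPolynomial σ Ω) :
    lamF l (h + h') = lamF l h + lamF l h' := by
  ext m; simp [coeff_lamF]

theorem lamF_mul (l : Ω →ₗ[k] k) (g : MvPolynomial σ k) (h : MvPolynomial σ Ω) :
    lamF l (map (algebraMap k Ω) g * h) = g * lamF l h := by
  classical
  ext m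
  rw [coeff_lamF, coeff_mul, coeff_mul, map_sum]
  refine Finset.sum_congr rfl fun x _ => ?_
  rw [coeff_map, coeff_lamF, ← Algebra.smul_def, map_smul, smul_eq_mul]

theorem lamF_mem (l : Ω →ₗ[k] k) (p : Ideal (MvPolynomial σ k)) {F : MvPolynomial σ Ω}
    (hF : F ∈ p.map (map (algebraMap k Ω))) : lamF l F ∈ p := by
  induction hF using Submodule.span_induction with
  | mem x hx =>
    obtain ⟨g, hg, rfl⟩ := hx
    rw [← mul_one (map (algebraMap k Ω) g), lamF_mul]
    exact p.mul_mem_right _ hg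
  | zero =>
    have : lamF l (0 : MvPolynomial σ Ω) = 0 := by ext m; simp [coeff_lamF]
    rw [this]; exact p.zero_mem
  | add x y _ _ hx hy => rw [lamF_add]; exact p.add_mem hx hy
  | smul a x hx' hx =>
    -- strengthen through the full statement
    clear hx
    have key : ∀ a : MvPolynomial σ Ω, lamF l (a * x) ∈ p := by
      induction hx' using Submodule.span_induction with
      | mem x hx =>
        obtain ⟨g, hg, rfl⟩ := hx
        intro a
        rw [mul_comm, lamF_mul]
        exact p.mul_mem_right _ hg
      | zero =>
        intro a
        have : lamF l (0 : MvPolynomial σ Ω) = 0 := by ext m; simp [coeff_lamF]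
        rw [mul_zero, this]; exact p.zero_mem
      | add x y _ _ hx hy => intro a; rw [mul_add, lamF_add]; exact p.add_mem (hx a) (hy a)
      | smul b x _ hx => intro a; rw [smul_eq_mul, ← mul_assoc]; exact hx _
    exact key a

/-- decomposition -/
theorem decomp (F : MvPolynomial σ Ω) :
    ∃ (s : Finset Ω) (l : Ω → (Ω →ₗ[k] k)),
      F = ∑ e ∈ s, C e * map (algebraMap k Ω) (lamF (l e) F) := by
  classical
  let b := Module.Basis.ofVectorSpace k Ω
  let s : Finset _ := F.support.biUnion fun m => (b.repr (coeff m F)).support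
  have hF : F = ∑ i ∈ s, C (b i) * map (algebraMap k Ω) (lamF (b.coord i) F) := by
    ext m
    rw [coeff_sum]
    simp only [coeff_C_mul, coeff_map, coeff_lamF]
    by_cases hm : m ∈ F.support
    · conv_lhs => rw [← b.linearCombination_repr (coeff m F)]
      rw [Finsupp.linearCombination_apply, Finsupp.sum_of_support_subset (s := s)]
      · refine Finset.sum_congr rfl fun i _ => ?_
        rw [Algebra.smul_def, mul_comm]; rfl
      · exact Finset.subset_biUnion_of_mem (fun m => (b.repr (coeff m F)).support) hm
      · simp
    · simp [notMem_support_iff.mp hm]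
  refine ⟨s.image b, Function.extend b (fun i => b.coord i) 0, ?_⟩
  rw [Finset.sum_image (fun x _ y _ h => b.injective h)]
  conv_lhs => rw [hF]
  refine Finset.sum_congr rfl fun i _ => ?_
  rw [b.injective.extend_apply]

theorem mem_map_iff (p : Ideal (MvPolynomial σ k)) (F : MvPolynomial σ Ω) :
    F ∈ p.map (map (algebraMap k Ω)) ↔ ∀ l : Ω →ₗ[k] k, lamF l F ∈ p := by
  refine ⟨fun h l => lamF_mem l p h, fun h => ?_⟩
  obtain ⟨s, l, hF⟩ := decomp (k := k) F
  rw [hF]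
  exact Ideal.sum_mem _ fun e _ => Ideal.mul_mem_left _ _ (Ideal.mem_map_of_mem _ (h _))

theorem aeval_lamF (l : Ω →ₗ[k] k) (F : MvPolynomial σ Ω) (z : σ → k) :
    eval z (lamF l F) = l (eval (fun i => algebraMap k Ω (z i)) F) := by
  classical
  rw [lamF, map_sum, eval_eq, map_sum]
  refine Finset.sum_congr rfl fun m _ => ?_
  rw [eval_monomial]
  have : (∏ i ∈ m.support, algebraMap k Ω (z i) ^ m i) = algebraMap k Ω (m.prod fun i e => z i ^ e) := by
    rw [Finsupp.prod, map_prod]; simp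
  rw [this, mul_comm (coeff m F), ← Algebra.smul_def, map_smul, smul_eq_mul, mul_comm]

/-- Lemma G -/
theorem map_isPrime [IsAlgClosed k] [Finite σ] (p : Ideal (MvPolynomial σ k)) [hp : p.IsPrime] :
    (p.map (map (algebraMap k Ω))).IsPrime := by
  have hvan : ∀ f : MvPolynomial σ k, (∀ z : σ → k, (∀ g ∈ p, eval z g = 0) → eval z f = 0) → f ∈ p := by
    intro f hf
    have := MvPolynomial.IsPrime.vanishingIdeal_zeroLocus (K := k) p
    rw [← this, MvPolynomial.mem_vanishingIdeal_iff]
    intro z hz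
    have := hf z (fun g hg => by simpa [aeval_eq_eval] using hz g hg)
    simpa [aeval_eq_eval] using this
  constructor
  · intro h
    apply hp.ne_top
    rw [Ideal.eq_top_iff_one] at h ⊢
    have hz : ∃ l : Ω →ₗ[k] k, l 1 = 1 := by
      obtain ⟨l, hl⟩ := LinearMap.exists_leftInverse_of_injective (Algebra.linearMap k Ω)
        (LinearMap.ker_eq_bot.mpr (algebraMap k Ω).injective)
      exact ⟨l, by simpa using LinearMap.congr_fun hl 1⟩
    obtain ⟨l, hl⟩ := hz
    have := lamF_mem l p h
    have h1 : lamF l (1 : MvPolynomial σ Ω) = 1 := by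
      classical
      ext m; rw [coeff_lamF, coeff_one, coeff_one]; split_ifs <;> simp [hl]
    rwa [h1] at this
  · intro f g hfg
    by_contra! hc
    obtain ⟨hf, hg⟩ := hc
    rw [mem_map_iff] at hf hg
    push Not at hf hg
    obtain ⟨l, hl⟩ := hf
    obtain ⟨l', hl'⟩ := hg
    have hprod : lamF l f * lamF l' g ∉ p := fun h => (hp.mem_or_mem h).elim hl hl'
    apply hprod
    apply hvan
    intro z hz
    have h0 : eval (fun i => algebraMap k Ω (z i)) (f * g) = 0 := by
      have : ∀ h ∈ p.map (map (algebraMap k Ω)), eval (fun i => algebraMap k Ω (z i)) h = 0 := by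
        intro h hh
        have : p.map (map (algebraMap k Ω)) ≤ RingHom.ker (eval (fun i => algebraMap k Ω (z i))) := by
          rw [Ideal.map_le_iff_le_comap]
          intro g hg
          rw [Ideal.mem_comap, RingHom.mem_ker, eval_map, ← aeval_def]
          have := MvPolynomial.aeval_algebraMap_apply (A := k) Ω z g
          refine this.trans ?_
          rw [aeval_eq_eval]
          simp [hz g hg]
        exact this hh
      exact this _ hfg
    rw [map_mul, mul_eq_zero] at h0
    rw [map_mul, aeval_lamF, aeval_lamF]
    rcases h0 with h0 | h0 <;> simp [h0]

/-- Lemma M -/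
theorem minimal_descends [IsAlgClosed k] [Finite σ] (I P : Ideal (MvPolynomial σ Ω))
    (hI : I ≤ (I.comap (map (algebraMap k Ω))).map (map (algebraMap k Ω)))
    (hP : P ∈ I.minimalPrimes) :
    P ≤ (P.comap (map (algebraMap k Ω))).map (map (algebraMap k Ω)) := by
  have := hP.1.1
  have h1 : (P.comap (map (algebraMap k Ω))).IsPrime := Ideal.comap_isPrime _ _
  have h2 := map_isPrime (Ω := Ω) (P.comap (map (algebraMap k Ω)))
  refine hP.2 ⟨h2, hI.trans (Ideal.map_mono (Ideal.comap_mono hP.1.2))⟩ Ideal.map_comap_le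

end descent

/-- Lemma 3 -/
theorem descend_form {k Ω : Type*} [Field k] [Field Ω] [Algebra k Ω] [IsAlgClosed k] {r : ℕ}
    (P : Ideal (MvPolynomial (Fin (r+1)) Ω)) [hP : P.IsPrime]
    (hdef : P ≤ (P.comap (map (algebraMap k Ω))).map (map (algebraMap k Ω)))
    (I : Finset (Fin (r + 1))) (b : ℕ) (hb : I.card = b + 1)
    (hI : ∀ c : Fin (r+1) → Ω, ∑ i ∈ I, C (c i) * X i ∈ P → ∀ i ∈ I, c i = 0)
    (d : ℕ) (F : MvPolynomial (Fin (r+1)) Ω) (hF : F ∈ P) (hFd : F.IsHomogeneous d) :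
    ∃ (t : ℕ) (c : Fin t → Ω) (g : Fin t → MvPolynomial (Fin (r+1)) k),
      t + (b * d + 1) ≤ Fintype.card (Mon r d) ∧ F = ∑ j, C (c j) * map (algebraMap k Ω) (g j) := by
  classical
  set φ := map (σ := Fin (r+1)) (algebraMap k Ω) with hφ
  have hpp : (P.comap φ).IsPrime := Ideal.comap_isPrime _ _
  set p := P.comap φ with hp
  let W := homogeneousSubmodule (Fin (r + 1)) k d
  let q : W →ₗ[k] (MvPolynomial (Fin (r+1)) k ⧸ p) := (Ideal.Quotient.mkₐ k p).toLinearMap.domRestrict W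
  have hIk : LinearIndependent k (fun i : I => Ideal.Quotient.mkₐ k p (X i.1)) := by
    rw [Fintype.linearIndependent_iff]
    intro g hg i
    have h1 : ∑ i : I, C (g i) * X i.1 ∈ p := by
      rw [← Ideal.Quotient.eq_zero_iff_mem, ← hg, map_sum]
      refine Finset.sum_congr rfl fun j _ => ?_
      rw [← smul_eq_C_mul]
      exact map_smul (Ideal.Quotient.mkₐ k p) _ _
    let c : Fin (r+1) → Ω := fun i => if h : i ∈ I then algebraMap k Ω (g ⟨i, h⟩) else 0
    have h2 : ∑ i ∈ I, C (c i) * X i ∈ P := by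
      have := h1
      rw [hp, Ideal.mem_comap, map_sum] at this
      convert this using 1
      rw [← Finset.sum_coe_sort]
      refine Finset.sum_congr rfl fun j _ => ?_
      simp [hφ, c]
    have := hI c h2 i.1 i.2
    simpa [c] using this
  have hh := hilb p I b hb hIk d
  have hrange : LinearMap.range q = W.map (Ideal.Quotient.mkₐ k p).toLinearMap := by
    rw [LinearMap.range_domRestrict]
  have hrk := LinearMap.finrank_range_add_finrank_ker q
  rw [hrange, finrank_hom] at hrk
  let N : Submodule k W := LinearMap.ker q
  have hfree : Module.Free k N := Module.Free.of_divisionRing k N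
  let B := Module.finBasis k N
  have hg : ∀ f : MvPolynomial (Fin (r+1)) k, f ∈ p → f.IsHomogeneous d →
      ∃ a : Fin _ → k, f = ∑ j, a j • ((B j : W) : MvPolynomial (Fin (r+1)) k) := by
    intro f hf hfd
    have hm : (⟨f, hfd⟩ : W) ∈ N := by
      change _ ∈ LinearMap.ker q
      rw [LinearMap.mem_ker]
      exact Ideal.Quotient.eq_zero_iff_mem.mpr hf
    refine ⟨fun j => B.repr ⟨_, hm⟩ j, ?_⟩
    have := B.sum_repr ⟨_, hm⟩
    have := congrArg (W.subtype ∘ₗ N.subtype) this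
    rw [map_sum] at this
    exact this.symm
  obtain ⟨s, l, hdec⟩ := decomp (k := k) F
  have hfh : ∀ e, (lamF (l e) F).IsHomogeneous d := by
    intro e m hm
    rw [coeff_lamF] at hm
    exact hFd (fun h => hm (by rw [h, map_zero]))
  choose a ha using fun e => hg (lamF (l e) F) (lamF_mem _ _ (hdef hF)) (hfh e)
  refine ⟨_, fun j => ∑ e ∈ s, e * algebraMap k Ω (a e j), fun j => ((B j : W) : MvPolynomial (Fin (r+1)) k), by
    have : Module.finrank k N = Module.finrank k (LinearMap.ker q) := rfl
    change Module.finrank k N + _ ≤ _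
    change b * d + 1 ≤ Module.finrank k ↥(W.map (Ideal.Quotient.mkₐ k p).toLinearMap) at hh
    omega, ?_⟩
  conv_lhs => rw [hdec]
  conv_lhs => enter [2, e]; rw [ha e]
  simp only [map_sum, Finset.mul_sum, Finset.sum_mul, map_mul]
  rw [Finset.sum_comm]
  refine Finset.sum_congr rfl fun j _ => Finset.sum_congr rfl fun e _ => ?_
  rw [smul_eq_C_mul, map_mul, map_C, mul_assoc]

end
end TL

namespace TL
noncomputable section
open MvPolynomial

/-- Lemma H -/
theorem hom_span {E σ J : Type*} [Field E] (G : J → MvPolynomial σ E) (e : J → ℕ)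
    (hG : ∀ j, (G j).IsHomogeneous (e j)) (N : ℕ) (f : MvPolynomial σ E) (hf : f.IsHomogeneous N)
    (hfG : f ∈ Ideal.span (Set.range G)) :
    f ∈ Submodule.span E {g | ∃ (α : σ →₀ ℕ) (j : J), α.degree + e j = N ∧ g = monomial α 1 * G j} := by
  classical
  set S := Submodule.span E {g | ∃ (α : σ →₀ ℕ) (j : J), α.degree + e j = N ∧ g = monomial α 1 * G j}
  have key : ∀ f ∈ Ideal.span (Set.range G), homogeneousComponent N f ∈ S := by
    intro f hf
    rw [Ideal.span, ← Submodule.mem_toAddSubmonoid, Submodule.mem_toAddSubmonoid] at hf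
    rw [Finsupp.mem_span_range_iff_exists_finsupp] at hf
    obtain ⟨c, rfl⟩ := hf
    rw [Finsupp.sum, map_sum]
    refine Submodule.sum_mem _ fun j _ => ?_
    rw [smul_eq_mul]
    conv => enter [2, 2]; rw [(c j).as_sum, Finset.sum_mul]
    rw [map_sum]
    refine Submodule.sum_mem _ fun α _ => ?_
    have hmon : monomial α (coeff α (c j)) * G j = (coeff α (c j)) • (monomial α 1 * G j) := by
      rw [← smul_mul_assoc, smul_monomial, smul_eq_mul, mul_one]
    rw [hmon, map_smul]
    refine Submodule.smul_mem _ _ ?_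
    have hh : (monomial α (1 : E) * G j).IsHomogeneous (α.degree + e j) :=
      (isHomogeneous_monomial _ rfl).mul (hG j)
    rw [homogeneousComponent_of_mem hh]
    split_ifs with h
    · exact Submodule.subset_span ⟨α, j, h.symm, rfl⟩
    · exact Submodule.zero_mem _
  have := key f hfG
  rwa [homogeneousComponent_of_mem hf, if_pos rfl] at this

/-- monomials -/
abbrev MonS (σ : Type*) (d : ℕ) := {m : σ →₀ ℕ // m.degree = d}

instance (σ : Type*) [Finite σ] (d : ℕ) : Finite (MonS σ d) := by
  have h : {m : σ →₀ ℕ | m.degree ≤ d}.Finite := Finsupp.finite_of_degree_le d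
  exact (h.subset (fun m (hm : m.degree = d) => hm.le)).to_subtype

/-- all monomials of degree N in the ideal -/
def Full {E σ J : Type*} [Field E] (G : J → MvPolynomial σ E) (N : ℕ) : Prop :=
  ∀ m : σ →₀ ℕ, m.degree = N → monomial m (1 : E) ∈ Ideal.span (Set.range G)

theorem hom_as_sum {E σ : Type*} [Field E] (N : ℕ) [Fintype (MonS σ N)] (f : MvPolynomial σ E)
    (hf : f.IsHomogeneous N) : f = ∑ m : MonS σ N, monomial m.1 (coeff m.1 f) := by
  classical
  ext m
  rw [coeff_sum]
  simp only [coeff_monomial]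
  by_cases hm : m.degree = N
  · rw [Finset.sum_eq_single ⟨m, hm⟩]
    · simp
    · intro b _ hb
      rw [if_neg]
      rintro rfl
      exact hb rfl
    · simp
  · rw [hf.coeff_eq_zero hm]
    symm
    apply Finset.sum_eq_zero
    intro b _
    rw [if_neg]
    rintro rfl
    exact hm b.2

/-- Elimination lemma -/
theorem elim {k σ τ J : Type*} [Field k] [Finite σ]
    (G : J → MvPolynomial σ (MvPolynomial τ k)) (e : J → ℕ)
    (hG : ∀ j, (G j).IsHomogeneous (e j)) (N : ℕ) {E₀ : Type*} [Field E₀] [Algebra k E₀]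
    (y₀ : τ → E₀)
    (h0 : Full (fun j => map (aeval y₀ : MvPolynomial τ k →ₐ[k] E₀).toRingHom (G j)) N) :
    ∃ q : MvPolynomial τ k, aeval y₀ q ≠ 0 ∧ ∀ (E : Type _) [Field E] [Algebra k E] (y : τ → E),
      aeval y q ≠ 0 → Full (fun j => map (aeval y : MvPolynomial τ k →ₐ[k] E).toRingHom (G j)) N := by
  classical
  have : Fintype (MonS σ N) := Fintype.ofFinite _
  let Row := {x : (σ →₀ ℕ) × J // x.1.degree + e x.2 = N}
  let v : Row → MvPolynomial σ (MvPolynomial τ k) := fun x => monomial x.1.1 1 * G x.1.2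
  have hv : ∀ x, (v x).IsHomogeneous N := fun x => by
    have : (v x).IsHomogeneous (x.1.1.degree + e x.1.2) := (isHomogeneous_monomial _ rfl).mul (hG _)
    rwa [x.2] at this
  let φ := (aeval y₀ : MvPolynomial τ k →ₐ[k] E₀).toRingHom
  let w : Row → (MonS σ N → E₀) := fun x m => φ (coeff m.1 (v x))
  have hspan : Submodule.span E₀ (Set.range w) = ⊤ := by
    rw [eq_top_iff, ← (Pi.basisFun E₀ (MonS σ N)).span_eq, Submodule.span_le]
    rintro _ ⟨m, rfl⟩
    have h1 := hom_span _ e (fun j => (hG j).map φ) N _ (isHomogeneous_monomial (1 : E₀) m.2) (h0 m.1 m.2)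
    let L : MvPolynomial σ E₀ →ₗ[E₀] (MonS σ N → E₀) := LinearMap.pi fun m => lcoeff E₀ m.1
    have h2 := Submodule.mem_map_of_mem (f := L) h1
    rw [Submodule.map_span] at h2
    have h3 : L (monomial m.1 1) = Pi.basisFun E₀ (MonS σ N) m := by
      ext m'
      simp [L, lcoeff, coeff_monomial, Pi.single_apply, Subtype.ext_iff, eq_comm]
    rw [h3] at h2
    refine Submodule.span_mono ?_ h2
    rintro _ ⟨_, ⟨α, j, hα, rfl⟩, rfl⟩
    refine ⟨⟨(α, j), hα⟩, ?_⟩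
    ext m'
    simp only [w, v, L, LinearMap.pi_apply, lcoeff_apply]
    rw [← coeff_map, map_mul, map_monomial, map_one]
  obtain ⟨κ, a, ha, hs, hli⟩ := exists_linearIndependent' E₀ w
  let B := Module.Basis.mk hli (by rw [hs, hspan])
  let eq := B.indexEquiv (Pi.basisFun E₀ (MonS σ N))
  let c : MonS σ N → Row := fun m => a (eq.symm m)
  let A : Matrix (MonS σ N) (MonS σ N) (MvPolynomial τ k) := Matrix.of fun m m' => coeff m'.1 (v (c m))
  refine ⟨A.det, ?_, ?_⟩
  · change φ A.det ≠ 0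
    rw [RingHom.map_det]
    have hli2 : LinearIndependent E₀ (fun m => (φ.mapMatrix A) m) := by
      exact hli.comp eq.symm eq.symm.injective
    have := Matrix.linearIndependent_rows_iff_isUnit.mp hli2
    rw [Matrix.isUnit_iff_isUnit_det] at this
    exact this.ne_zero
  · intro E _ _ y hy m hm
    let ψ := (aeval y : MvPolynomial τ k →ₐ[k] E).toRingHom
    have hy' : IsUnit (ψ.mapMatrix A).det := by
      rw [← RingHom.map_det]; exact isUnit_iff_ne_zero.mpr hy
    set A' := ψ.mapMatrix A with hA'
    have h1 : A'⁻¹ * A' = 1 := Matrix.nonsing_inv_mul _ hy'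
    have h2 : (monomial m (1 : E)) = ∑ m', C (A'⁻¹ ⟨m, hm⟩ m') * map ψ (v (c m')) := by
      rw [hom_as_sum N _ (isHomogeneous_monomial (1 : E) hm)]
      have : ∀ m', map ψ (v (c m')) = ∑ m'' : MonS σ N, monomial m''.1 (A' m' m'') := by
        intro m'
        rw [hom_as_sum N _ ((hv (c m')).map ψ)]
        refine Finset.sum_congr rfl fun m'' _ => ?_
        rw [coeff_map]; rfl
      simp only [this, Finset.mul_sum]
      rw [Finset.sum_comm]
      refine Finset.sum_congr rfl fun m'' _ => ?_
      simp only [C_mul_monomial]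
      rw [← map_sum]
      congr 1
      have := congrFun (congrFun h1 ⟨m, hm⟩) m''
      rw [Matrix.mul_apply] at this
      rw [this, coeff_monomial, Matrix.one_apply]
      simp [Subtype.ext_iff]
    rw [h2]
    refine Ideal.sum_mem _ fun m' _ => Ideal.mul_mem_left _ _ ?_
    simp only [v, map_mul]
    exact Ideal.mul_mem_left _ _ (Ideal.subset_span ⟨_, rfl⟩)

end
end TL

namespace TL
noncomputable section
open MvPolynomial

theorem int_le (A B : Type*) [CommRing A] [CommRing B] [Algebra A B] [Algebra.IsIntegral A B] :
    ringKrullDim B ≤ ringKrullDim A := by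
  refine Order.krullDim_le_of_strictMono (PrimeSpectrum.comap (algebraMap A B)) ?_
  intro p q hpq
  exact Ideal.IsIntegral.comap_lt_comap (I := p.asIdeal) (J := q.asIdeal) hpq

theorem int_ge (A B : Type*) [CommRing A] [CommRing B] [Algebra A B] [Algebra.IsIntegral A B]
    (hinj : Function.Injective (algebraMap A B)) :
    ringKrullDim A ≤ ringKrullDim B := by
  have : FaithfulSMul A B := (faithfulSMul_iff_algebraMap_injective A B).mpr hinj
  refine iSup_le fun l => ?_
  have hker : RingHom.ker (algebraMap A B) ≤ (RelSeries.head l).asIdeal := by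
    rw [(RingHom.injective_iff_ker_eq_bot _).mp hinj]; exact bot_le
  obtain ⟨Q, hQ, hQc⟩ := Ideal.exists_ideal_over_prime_of_isIntegral (S := B) (RelSeries.head l).asIdeal ⊥
    hker
  have : Q.LiesOver (RelSeries.head l).asIdeal := ⟨hQc.2.symm⟩
  have hQp := hQc.1
  have : Algebra.HasGoingUp A B := Algebra.HasGoingUp.of_isIntegral
  obtain ⟨L, hL, -⟩ := Ideal.exists_ltSeries_of_hasGoingUp (S := B) l Q
  rw [← hL]
  exact Order.LTSeries.length_le_krullDim L

/-- linear form -/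
def linf {K E : Type*} [Field K] [Field E] [Algebra K E] {r : ℕ} (c : Fin (r+1) → K) :
    MvPolynomial (Fin (r+1)) E := ∑ i, C (algebraMap K E (c i)) * X i

theorem linf_hom {K E : Type*} [Field K] [Field E] [Algebra K E] {r : ℕ} (c : Fin (r+1) → K) :
    (linf c : MvPolynomial (Fin (r+1)) E).IsHomogeneous 1 := by
  refine IsHomogeneous.sum _ _ _ fun i _ => ?_
  have := (isHomogeneous_C (Fin (r+1)) (algebraMap K E (c i))).mul (isHomogeneous_X E i)
  simpa using this

/-- condition P_h -/
def PH (K : Type*) {E J : Type*} [Field K] [Field E] [Algebra K E] {r : ℕ} (h : ℕ)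
    (F : J → MvPolynomial (Fin (r+1)) E) : Prop :=
  ∃ (c : Fin h → Fin (r+1) → K) (N : ℕ), Full (Sum.elim F (fun s => linf (c s))) N

theorem dim_le_of_PH_aux {K E J Q : Type*} [Field K] [Field E] [Algebra K E] {r : ℕ} (h : ℕ)
    [CommRing Q] [Algebra E Q] (π : MvPolynomial (Fin (r+1)) E →ₐ[E] Q)
    (hπ : Function.Surjective π)
    (F : J → MvPolynomial (Fin (r+1)) E) (e : J → ℕ) (hF : ∀ j, (F j).IsHomogeneous (e j))
    (hπF : ∀ j, π (F j) = 0)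
    (hP : PH K h F) :
    ringKrullDim Q ≤ (h : WithBot ℕ∞) := by
  obtain ⟨c, N, hN⟩ := hP
  let g : MvPolynomial (Fin h) E →ₐ[E] Q :=
    aeval (fun s => π (linf (c s)))
  let : Algebra (MvPolynomial (Fin h) E) Q := g.toRingHom.toAlgebra
  let Lin : Fin h → MvPolynomial (Fin (r+1)) E := fun s => linf (c s)
  let S : Submodule (MvPolynomial (Fin h) E) Q :=
    Submodule.span _ ((fun m => π (monomial m 1)) '' {m | m.degree ≤ N})
  have hsmul : ∀ (a : E) (x : Q), x ∈ S → a • x ∈ S := by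
    intro a x hx
    have : a • x = (C a : MvPolynomial (Fin h) E) • x := by
      rw [Algebra.smul_def, Algebra.smul_def]
      congr 1
      change _ = g (C a)
      simp [g]
    rw [this]
    exact S.smul_mem _ hx
  have key : ∀ n : ℕ, ∀ m : Fin (r+1) →₀ ℕ, m.degree = n → π (monomial m 1) ∈ S := by
    intro n
    induction n using Nat.strong_induction_on with
    | _ n ih =>
      intro m hm
      by_cases hn : n ≤ N
      · exact Submodule.subset_span ⟨m, by simpa [hm] using hn, rfl⟩
      · push Not at hn
        obtain ⟨m1, hm1, hm1d⟩ : ∃ m1 ≤ m, m1.degree = N := by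
          have : ∀ t ≤ m.degree, ∃ m1 ≤ m, m1.degree = t := by
            intro t
            induction t with
            | zero => intro _; exact ⟨0, by simp, by simp⟩
            | succ t iht =>
              intro ht
              obtain ⟨m1, h1, h2⟩ := iht (by omega)
              have : ∃ i, m1 i < m i := by
                by_contra! hcon
                have : m ≤ m1 := hcon
                have := le_antisymm this h1
                subst this
                omega
              obtain ⟨i, hi⟩ := this
              refine ⟨m1 + Finsupp.single i 1, ?_, by simp [h2]⟩
              intro j
              by_cases hj : j = i
              · subst hj; simp; omega
              · simp [Ne.symm hj]; exact h1 j
          exact this N (by omega)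
        have hmem : monomial m (1 : E) ∈ Ideal.span (Set.range (Sum.elim F Lin)) := by
          have : monomial m (1 : E) = monomial (m - m1) 1 * monomial m1 1 := by
            rw [monomial_mul, one_mul, tsub_add_cancel_of_le hm1]
          rw [this]
          exact Ideal.mul_mem_left _ _ (hN m1 hm1d)
        have h1 := hom_span (Sum.elim F Lin) (Sum.elim e (fun _ => 1)) (by
          rintro (j | s)
          · exact hF j
          · exact linf_hom (c s)) n _ (isHomogeneous_monomial (1:E) hm) hmem
        have h2 : ∀ f ∈ Submodule.span E {g | ∃ (α : Fin (r+1) →₀ ℕ) (j : J ⊕ Fin h), α.degree + Sum.elim e (fun _ => 1) j = n ∧ g = monomial α 1 * Sum.elim F Lin j}, π f ∈ S := by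
          intro f hf
          induction hf using Submodule.span_induction with
          | mem x hx =>
            obtain ⟨α, j | s, hα, rfl⟩ := hx
            · have : π (monomial α 1 * Sum.elim F Lin (Sum.inl j)) = 0 := by
                rw [map_mul]; simp [hπF]
              rw [this]; exact S.zero_mem
            · have : π (monomial α 1 * Sum.elim F Lin (Sum.inr s)) =
                  (X s : MvPolynomial (Fin h) E) • π (monomial α 1) := by
                rw [Algebra.smul_def, map_mul, mul_comm]
                congr 1
                change _ = g (X s)
                simp [g, Lin]
              rw [this]
              simp only [Sum.elim_inr] at hα
              exact S.smul_mem _ (ih α.degree (by omega) α rfl)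
          | zero => rw [map_zero]; exact S.zero_mem
          | add x y _ _ hx hy => rw [map_add]; exact S.add_mem hx hy
          | smul a x _ hx =>
            have : π (a • x) = a • π x := map_smul π a x
            rw [this]; exact hsmul _ _ hx
        exact h2 _ h1
  have htop : S = ⊤ := by
    rw [eq_top_iff]
    rintro x -
    obtain ⟨f, rfl⟩ := hπ x
    rw [f.as_sum, map_sum]
    refine Submodule.sum_mem _ fun m _ => ?_
    have : π (monomial m (coeff m f)) = coeff m f • π (monomial m 1) := by
      have h0 : monomial m (coeff m f) = coeff m f • (monomial m (1 : E)) := by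
        rw [smul_monomial, smul_eq_mul, mul_one]
      rw [h0, map_smul]
    rw [this]
    exact hsmul _ _ (key _ m rfl)
  have hfin : Module.Finite (MvPolynomial (Fin h) E) Q := by
    refine ⟨?_⟩
    rw [← htop]
    exact Submodule.fg_span ((Finsupp.finite_of_degree_le N).image _)
  have hint : Algebra.IsIntegral (MvPolynomial (Fin h) E) Q :=
    Algebra.IsIntegral.of_finite _ _
  refine (int_le (MvPolynomial (Fin h) E) _).trans ?_
  rw [MvPolynomial.ringKrullDim_of_isNoetherianRing, ringKrullDim_eq_zero_of_field]
  simp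

theorem dim_le_of_PH {K E J : Type*} [Field K] [Field E] [Algebra K E] {r : ℕ} (h : ℕ)
    (F : J → MvPolynomial (Fin (r+1)) E) (e : J → ℕ) (hF : ∀ j, (F j).IsHomogeneous (e j))
    (hP : PH K h F) :
    ringKrullDim (MvPolynomial (Fin (r+1)) E ⧸ Ideal.span (Set.range F)) ≤ (h : WithBot ℕ∞) :=
  dim_le_of_PH_aux h (Ideal.Quotient.mkₐ E _) (Ideal.Quotient.mkₐ_surjective _ _) F e hF
    (fun j => Ideal.Quotient.eq_zero_iff_mem.mpr (Ideal.subset_span ⟨j, rfl⟩)) hP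

end
end TL

namespace TL
noncomputable section
open MvPolynomial

/-- irrelevant ideal -/
def irr (E : Type*) [Field E] (r : ℕ) : Ideal (MvPolynomial (Fin (r+1)) E) :=
  RingHom.ker (constantCoeff (R := E) (σ := Fin (r+1)))

instance irr_max (E : Type*) [Field E] (r : ℕ) : (irr E r).IsMaximal :=
  RingHom.ker_isMaximal_of_surjective _ (fun a => ⟨C a, by simp⟩)

theorem irr_le {E : Type*} [Field E] {r : ℕ} (P : Ideal (MvPolynomial (Fin (r+1)) E))
    (h : ∀ i, X i ∈ P) : irr E r ≤ P := by
  intro f hf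
  have : f ∈ Ideal.span (X '' (Set.univ : Set (Fin (r+1)))) := by
    rw [mem_ideal_span_X_image]
    intro m hm
    by_contra! hc
    have : m = 0 := by ext i; exact hc i trivial
    subst this
    rw [mem_support_iff] at hm
    exact hm hf
  refine (Ideal.span_le.mpr ?_) this
  rintro _ ⟨i, -, rfl⟩
  exact h i

theorem hom_mem_irr {E : Type*} [Field E] {r : ℕ} {f : MvPolynomial (Fin (r+1)) E} {e : ℕ}
    (hf : f.IsHomogeneous e) (he : 1 ≤ e) : f ∈ irr E r := by
  change coeff 0 f = 0
  exact hf.coeff_eq_zero (by simp; omega)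

theorem hom_eval_smul {E σ : Type*} [Field E] {f : MvPolynomial σ E} {e : ℕ}
    (hf : f.IsHomogeneous e) (t : E) (ξ : σ → E) : eval (t • ξ) f = t ^ e * eval ξ f := by
  rw [eval_eq, eval_eq, Finset.mul_sum]
  refine Finset.sum_congr rfl fun m hm => ?_
  have h1 : m.degree = e := by
    by_contra h
    exact (mem_support_iff.mp hm) (hf.coeff_eq_zero h)
  simp only [Pi.smul_apply, smul_eq_mul, mul_pow]
  rw [Finset.prod_mul_distrib, Finset.prod_pow_eq_pow_sum]
  have : ∑ i ∈ m.support, m i = e := by rw [← h1]; rfl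
  rw [this]; ring

theorem chain_zero {E J : Type*} [Field E] [IsAlgClosed E] {r : ℕ}
    (F : J → MvPolynomial (Fin (r+1)) E) (e : J → ℕ) (hF : ∀ j, (F j).IsHomogeneous (e j))
    (hno : ∀ N, ¬ Full F N) :
    ∃ P : Ideal (MvPolynomial (Fin (r+1)) E), P.IsPrime ∧ Ideal.span (Set.range F) ≤ P ∧ P < irr E r := by
  have hξ : ∃ ξ : Fin (r+1) → E, ξ ≠ 0 ∧ ∀ j, eval ξ (F j) = 0 := by
    by_contra! hc
    set I := Ideal.span (Set.range F)
    have hle : irr E r ≤ I.radical := by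
      apply irr_le
      intro i
      rw [← MvPolynomial.vanishingIdeal_zeroLocus_eq_radical (K := E), mem_vanishingIdeal_iff]
      intro z hz
      by_cases hz0 : z = 0
      · simp [hz0]
      · obtain ⟨j, hj⟩ := hc z hz0
        exact absurd (by simpa [aeval_eq_eval] using hz (F j) (Ideal.subset_span ⟨j, rfl⟩)) hj
    obtain ⟨N, hN⟩ := Ideal.exists_pow_le_of_le_radical_of_fg hle
      (IsNoetherian.noetherian _)
    refine hno N fun m hm => hN ?_
    have : monomial m (1 : E) = ∏ i, X i ^ m i := by
      rw [monomial_eq, Finsupp.prod_fintype _ _ (by simp)]; simp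
    rw [this]
    have hd : m.degree = ∑ i, m i := Finsupp.degree_eq_sum m
    rw [← hm, hd, ← Finset.prod_pow_eq_pow_sum]
    exact Ideal.prod_mem_prod fun i _ => Ideal.pow_mem_pow (by change constantCoeff (X i) = 0; simp) _
  obtain ⟨ξ, hξ0, hξ⟩ := hξ
  let φ : MvPolynomial (Fin (r+1)) E →ₐ[E] Polynomial E := aeval (fun i => Polynomial.C (ξ i) * Polynomial.X)
  have hφ : ∀ f : MvPolynomial (Fin (r+1)) E, ∀ t, (φ f).eval t = eval (fun i => ξ i * t) f := by
    intro f t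
    have : (Polynomial.aeval t).comp φ = aeval (fun i => ξ i * t) := by
      ext i; simp [φ]
    have := DFunLike.congr_fun this f
    simpa [aeval_eq_eval] using this
  refine ⟨RingHom.ker φ.toRingHom, RingHom.ker_isPrime _, ?_, ?_⟩
  · rw [Ideal.span_le]
    rintro _ ⟨j, rfl⟩
    change φ (F j) = 0
    apply Polynomial.funext
    intro t
    rw [hφ, Polynomial.eval_zero]
    have h2 : (fun i => ξ i * t) = t • ξ := by ext i; simp [mul_comm]
    rw [h2]
    have := hom_eval_smul (hF j) t ξ
    rw [this, hξ j, mul_zero]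
  · have hle : RingHom.ker φ.toRingHom ≤ irr E r := by
      intro f hf
      have h1 : φ f = 0 := hf
      have := hφ f 0
      rw [h1] at this
      change constantCoeff f = 0
      rw [← eval_zero]
      simpa [Pi.zero_def] using this.symm
    refine lt_of_le_of_ne hle fun h => ?_
    obtain ⟨i, hi⟩ := Function.ne_iff.mp hξ0
    have : (X i : MvPolynomial (Fin (r+1)) E) ∈ RingHom.ker φ.toRingHom := by
      rw [h]; change constantCoeff (X i) = 0; simp
    have h3 : φ (X i) = 0 := this
    simp [φ] at h3
    exact hi h3

theorem chain_of_not_PH {K E : Type*} [Field K] [Field E] [Algebra K E] [IsAlgClosed E]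
    [Infinite K] {r : ℕ} (h : ℕ) : ∀ {J : Type} (F : J → MvPolynomial (Fin (r+1)) E) (e : J → ℕ)
    (_ : ∀ j, (F j).IsHomogeneous (e j)) (_ : ¬ PH K h F),
    ∃ l : LTSeries (PrimeSpectrum (MvPolynomial (Fin (r+1)) E)), l.length = h + 1 ∧
      Ideal.span (Set.range F) ≤ l.head.asIdeal ∧ l.last.asIdeal = irr E r := by
  induction h with
  | zero =>
    intro J F e hF hno
    have : ∀ N, ¬ Full F N := by
      intro N hN
      refine hno ⟨fun i => i.elim0, N, fun m hm => ?_⟩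
      refine Ideal.span_mono ?_ (hN m hm)
      rintro _ ⟨j, rfl⟩
      exact ⟨Sum.inl j, rfl⟩
    obtain ⟨P, hP, hPF, hlt⟩ := chain_zero F e hF this
    let l : LTSeries (PrimeSpectrum (MvPolynomial (Fin (r+1)) E)) :=
      RelSeries.cons (RelSeries.singleton _ (⟨irr E r, inferInstance⟩ : PrimeSpectrum (MvPolynomial (Fin (r+1)) E))) ⟨P, hP⟩ hlt
    refine ⟨l, rfl, ?_, ?_⟩
    · have : l.head = ⟨P, hP⟩ := RelSeries.head_cons _ _ _
      rw [this]; exact hPF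
    · have : l.last = ⟨irr E r, inferInstance⟩ := RelSeries.last_cons _ _ _
      rw [this]
  | succ h ih =>
    intro J F e hF hno
    set I := Ideal.span (Set.range F)
    let bad : Set (Ideal (MvPolynomial (Fin (r+1)) E)) := {P ∈ I.minimalPrimes | ¬ irr E r ≤ P}
    have hbad : bad.Finite := (Ideal.finite_minimalPrimes_of_isNoetherianRing _ I).subset (fun _ h => h.1)
    let sub : Ideal (MvPolynomial (Fin (r+1)) E) → Submodule K (Fin (r+1) → K) := fun P =>
      (P.restrictScalars K).comap (∑ i, (LinearMap.toSpanSingleton K _ (X i : MvPolynomial (Fin (r+1)) E)).comp (LinearMap.proj i))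
    have hsub : ∀ P c, c ∈ sub P ↔ (linf c : MvPolynomial (Fin (r+1)) E) ∈ P := by
      intro P c
      simp only [sub, Submodule.mem_comap, Submodule.restrictScalars_mem]
      have : (∑ i, (LinearMap.toSpanSingleton K _ (X i : MvPolynomial (Fin (r+1)) E)).comp (LinearMap.proj i)) c = (linf c : MvPolynomial (Fin (r+1)) E) := by
        simp only [linf, LinearMap.sum_apply, LinearMap.comp_apply, LinearMap.proj_apply, LinearMap.toSpanSingleton_apply]
        refine Finset.sum_congr rfl fun i _ => ?_
        rw [Algebra.smul_def]; rfl
      rw [this]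
    obtain ⟨c, hc⟩ : ∃ c : Fin (r+1) → K, ∀ P ∈ bad, (linf c : MvPolynomial (Fin (r+1)) E) ∉ P := by
      have h1 : (⊤ : Submodule K (Fin (r+1) → K)) ∉ (hbad.toFinset.image sub) := by
        classical
        intro hmem
        rw [Finset.mem_image] at hmem
        obtain ⟨P, hP, hPt⟩ := hmem
        rw [Set.Finite.mem_toFinset] at hP
        refine hP.2 (irr_le P fun i => ?_)
        have : Pi.single i 1 ∈ sub P := by rw [hPt]; trivial
        rw [hsub] at this
        have h2 : (linf (Pi.single i (1:K)) : MvPolynomial (Fin (r+1)) E) = X i := by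
          rw [linf, Finset.sum_eq_single i]
          · simp
          · intro j _ hj; simp [hj]
          · simp
        rwa [h2] at this
      have h2 := Subspace.biUnion_ne_univ_of_top_notMem h1
      obtain ⟨c, hc⟩ := (Set.ne_univ_iff_exists_notMem _).mp h2
      refine ⟨c, fun P hP hcP => hc ?_⟩
      simp only [Set.mem_iUnion]
      exact ⟨sub P, Finset.mem_image_of_mem _ (hbad.mem_toFinset.mpr hP), (hsub P c).mpr hcP⟩
    let F' : Option J → MvPolynomial (Fin (r+1)) E := fun o => o.elim (linf c) F
    have hno' : ¬ PH K h F' := by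
      rintro ⟨c', N, hN⟩
      refine hno ⟨Fin.cons c c', N, fun m hm => Ideal.span_mono ?_ (hN m hm)⟩
      rintro _ ⟨(_ | j) | s, rfl⟩
      · exact ⟨Sum.inr 0, by simp [F']⟩
      · exact ⟨Sum.inl j, by simp [F']⟩
      · exact ⟨Sum.inr s.succ, by simp⟩
    obtain ⟨l, hl, hlF, hlast⟩ := ih F' (fun o => o.elim 1 e) (by
      rintro (_ | j)
      · exact linf_hom c
      · exact hF j) hno'
    have hIF : I ≤ l.head.asIdeal := by
      refine le_trans (Ideal.span_mono ?_) hlF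
      rintro _ ⟨j, rfl⟩
      exact ⟨some j, rfl⟩
    obtain ⟨P, hPm, hPl⟩ := Ideal.exists_minimalPrimes_le hIF
    have hcl : (linf c : MvPolynomial (Fin (r+1)) E) ∈ l.head.asIdeal :=
      hlF (Ideal.subset_span ⟨none, rfl⟩)
    have hheadlast : l.head < l.last := by
      apply LTSeries.strictMono l
      rw [Fin.lt_def]
      simp [hl]
    have hPbad : P ∈ bad := by
      refine ⟨hPm, fun hle => ?_⟩
      have h1 : irr E r ≤ l.head.asIdeal := hle.trans hPl
      rw [← hlast] at h1
      exact absurd h1 (not_le_of_gt hheadlast)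
    have hlt : P < l.head.asIdeal := lt_of_le_of_ne hPl (fun h => hc P hPbad (h ▸ hcl))
    refine ⟨l.cons ⟨P, hPm.1.1⟩ hlt, by simp [hl], by simpa using hPm.1.2, by simpa using hlast⟩

theorem dim_ge_of_chain {R : Type*} [CommRing R] (I : Ideal R) (l : LTSeries (PrimeSpectrum R))
    (hl : I ≤ l.head.asIdeal) : (l.length : WithBot ℕ∞) ≤ ringKrullDim (R ⧸ I) := by
  rw [ringKrullDim_quotient]
  let l' : LTSeries (PrimeSpectrum.zeroLocus (R := R) I) :=
    { length := l.length
      toFun := fun i => ⟨l i, hl.trans (l.head_le i)⟩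
      step := fun i => l.step i }
  exact Order.LTSeries.length_le_krullDim l'

end
end TL

namespace TL
noncomputable section
open MvPolynomial

section
variable {K Ω : Type*} [Field K] [Field Ω] [Algebra K Ω]

/-- relative algebraic closure of K(B) -/
def kB (K : Type*) {Ω : Type*} [Field K] [Field Ω] [Algebra K Ω] (B : Set Ω) : IntermediateField K Ω :=
  (algebraicClosure (IntermediateField.adjoin K B) Ω).restrictScalars K

theorem mem_kB {B : Set Ω} {x : Ω} : x ∈ kB K B ↔ IsAlgebraic (IntermediateField.adjoin K B) x :=
  mem_algebraicClosure_iff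

open IntermediateField.algebraAdjoinAdjoin in
theorem kB_eq (B : Set Ω) : (kB K B : Set Ω) = (AlgebraicIndependent.matroid K Ω).closure B := by
  rw [AlgebraicIndependent.matroid_closure_eq]
  ext x
  have := IsFractionRing.isAlgebraic_iff (Algebra.adjoin K B) (IntermediateField.adjoin K B) Ω (x := x)
  change x ∈ kB K B ↔ _
  rw [mem_kB, ← this]
  rfl

theorem kB_mono {B B' : Set Ω} (h : B ⊆ B') : (kB K B : Set Ω) ⊆ kB K B' := by
  rw [kB_eq, kB_eq]
  exact Matroid.closure_subset_closure _ h

theorem subset_kB (B : Set Ω) : B ⊆ kB K B := by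
  rw [kB_eq]
  exact Matroid.subset_closure _ _ (by simp)

theorem acl_closed (F Ω : Type*) [Field F] [Field Ω] [Algebra F Ω] [IsAlgClosed Ω] :
    IsAlgClosed (algebraicClosure F Ω) := IsAlgClosure.isAlgClosed F

instance kB_closed [IsAlgClosed Ω] (B : Set Ω) : IsAlgClosed (kB K B) := by
  exact acl_closed (IntermediateField.adjoin K B) Ω

theorem card_le_of_algInd {A : Type*} [CommRing A] [IsDomain A] [Algebra K A] (B : Set A) {n : ℕ} (z : Fin n → A)
    (hz : AlgebraicIndependent K z) (hzB : Set.range z ⊆ (AlgebraicIndependent.matroid K A).closure B) :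
    (n : ℕ∞) ≤ B.encard := by
  have h1 : (AlgebraicIndependent.matroid K A).Indep (Set.range z) := by
    rw [AlgebraicIndependent.matroid_indep_iff]
    exact hz.to_subtype_range
  have h2 := h1.encard_le_eRk_of_subset hzB
  rw [Matroid.eRk_closure_eq] at h2
  have h3 := h2.trans (Matroid.eRk_le_encard _ _)
  have h4 : (Set.range z).encard = n := by
    rw [← Set.image_univ, hz.injective.encard_image]; simp
  rwa [h4] at h3

/-- (alpha) -/
theorem dim_le_card {R : Type*} [CommRing R] [IsDomain R] [Algebra K R] [Algebra.FiniteType K R]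
    (f : R →ₐ[K] Ω) (hf : Function.Injective f) (B : Set Ω) (hB : ∀ x, f x ∈ kB K B) (n : ℕ)
    (hn : B.encard ≤ n) : ringKrullDim R ≤ n := by
  obtain ⟨s, g, hg, hint⟩ := exists_integral_inj_algHom_of_fg K R
  let := g.toRingHom.toAlgebra
  have : Algebra.IsIntegral (MvPolynomial (Fin s) K) R := ⟨hint⟩
  refine (int_le (MvPolynomial (Fin s) K) R).trans ?_
  rw [MvPolynomial.ringKrullDim_of_isNoetherianRing, ringKrullDim_eq_zero_of_field]
  have hz : AlgebraicIndependent K (fun i => f (g (X i))) := by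
    rw [algebraicIndependent_iff_injective_aeval]
    have : aeval (fun i => f (g (X i))) = f.comp g := by ext i; simp
    rw [this]
    exact hf.comp hg
  have := card_le_of_algInd B _ hz (by
    rw [← kB_eq]
    rintro _ ⟨i, rfl⟩
    exact hB _)
  have h2 := this.trans hn
  have : s ≤ n := by exact_mod_cast h2
  simpa using this

/-- (beta) -/
theorem card_le_dim {R : Type*} [CommRing R] [IsDomain R] [Algebra K R] [Algebra.FiniteType K R]
    {n : ℕ} (z : Fin n → R) (hz : AlgebraicIndependent K z) : (n : WithBot ℕ∞) ≤ ringKrullDim R := by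
  obtain ⟨s, g, hg, hint⟩ := exists_integral_inj_algHom_of_fg K R
  let := g.toRingHom.toAlgebra
  have : Algebra.IsIntegral (MvPolynomial (Fin s) K) R := ⟨hint⟩
  refine le_trans ?_ (int_ge (MvPolynomial (Fin s) K) R hg)
  rw [MvPolynomial.ringKrullDim_of_isNoetherianRing, ringKrullDim_eq_zero_of_field]
  have := card_le_of_algInd (Set.range (fun i => g (X i))) z hz (by
    rw [AlgebraicIndependent.matroid_closure_eq]
    intro x _
    change IsAlgebraic _ x
    have hx : IsIntegral (MvPolynomial (Fin s) K) x := Algebra.IsIntegral.isIntegral x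
    obtain ⟨p, hp, hpx⟩ := hx
    have hgm : ∀ q, g q ∈ Algebra.adjoin K (Set.range (fun i => g (X i))) := by
      intro q
      have : g = aeval (fun i => g (X i)) := by ext i; simp
      rw [Algebra.adjoin_range_eq_range_aeval]
      exact ⟨q, by rw [← this]; rfl⟩
    let g' : MvPolynomial (Fin s) K →ₐ[K] Algebra.adjoin K (Set.range (fun i => g (X i))) :=
      g.codRestrict _ hgm
    refine IsIntegral.isAlgebraic ⟨p.map g'.toRingHom, hp.map _, ?_⟩
    rw [Polynomial.eval₂_map]
    exact hpx)
  have h2 : (Set.range (fun i => g (X i))).encard ≤ s := by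
    rw [← Set.image_univ]
    exact (Set.encard_image_le _ _).trans (by simp)
  have : n ≤ s := by exact_mod_cast this.trans h2
  simpa using this

end
end
end TL

namespace TL
noncomputable section
open MvPolynomial TopologicalSpace
set_option linter.unusedSectionVars false

theorem zariski_closed_iff {K M ι : Type*} [Field K] [AddCommGroup M] [Module K M] [Finite ι]
    (e : M ≃ₗ[K] (ι → K)) (s : Set M) :
    @IsClosed M (zariskiTopology K M) s ↔
      ∃ S : Set (MvPolynomial ι K), s = {v | ∀ p ∈ S, eval (e v) p = 0} := by
  classical
  have : Fintype ι := Fintype.ofFinite _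
  have h0 : @IsClosed M (zariskiTopology K M) s ↔ s ∈ zariskiCloseds K M := by
    rw [← @isOpen_compl_iff M s (zariskiTopology K M)]
    change sᶜᶜ ∈ zariskiCloseds K M ↔ _
    rw [compl_compl]
  rw [h0]
  constructor
  · rintro ⟨S, rfl⟩
    let t : MvPolynomial (M →ₗ[K] K) K →ₐ[K] MvPolynomial ι K :=
      aeval fun φ => ∑ i, C (φ (e.symm (Pi.single i 1))) * X i
    have ht : ∀ p v, eval (e v) (t p) = polyEval K M p v := by
      intro p v
      have : (aeval (e v) : MvPolynomial ι K →ₐ[K] K).comp t = aeval (fun φ : M →ₗ[K] K => φ v) := by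
        ext φ
        simp only [t, AlgHom.comp_apply, aeval_X, map_sum, map_mul]
        have hv : v = ∑ i, (e v i) • e.symm (Pi.single i 1) := by
          apply e.injective
          rw [map_sum]
          ext j
          simp [Finset.sum_apply, Pi.single_apply]
        conv_rhs => rw [hv]
        rw [map_sum]
        refine Finset.sum_congr rfl fun i _ => ?_
        simp [mul_comm]
      have := DFunLike.congr_fun this p
      simpa [aeval_eq_eval, polyEval] using this
    refine ⟨t '' S, ?_⟩
    ext v
    simp [ht]
  · rintro ⟨S, rfl⟩
    let t : MvPolynomial ι K → MvPolynomial (M →ₗ[K] K) K :=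
      rename (fun i => (LinearMap.proj i).comp e.toLinearMap)
    refine ⟨t '' S, ?_⟩
    ext v
    have ht : ∀ p, polyEval K M (t p) v = eval (e v) p := by
      intro p
      simp only [t, polyEval, eval_rename]
      rfl
    simp [ht]

section
variable {K M : Type*} {ι : Type*} [Field K] [Finite ι] [TopologicalSpace M] (e : M ≃ (ι → K))

/-- coordinates describe closed sets -/
def IsCoord : Prop := ∀ s : Set M, IsClosed s ↔
      ∃ S : Set (MvPolynomial ι K), s = {v | ∀ p ∈ S, eval (e v) p = 0}

/-- vanishing ideal -/
def Iof (s : Set M) : Ideal (MvPolynomial ι K) where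
  carrier := {p | ∀ v ∈ s, eval (e v) p = 0}
  add_mem' := fun ha hb v hv => by rw [map_add, ha v hv, hb v hv, add_zero]
  zero_mem' := fun v _ => map_zero _
  smul_mem' := fun c x hx v hv => by rw [smul_eq_mul, map_mul, hx v hv, mul_zero]

/-- zero locus -/
def Vof (I : Ideal (MvPolynomial ι K)) : Set M := {v | ∀ p ∈ I, eval (e v) p = 0}

variable {e}

theorem mem_Iof {s : Set M} {p} : p ∈ Iof e s ↔ ∀ v ∈ s, eval (e v) p = 0 := Iff.rfl

theorem Iof_anti {s t : Set M} (h : s ⊆ t) : Iof e t ≤ Iof e s := fun _ hp v hv => hp v (h hv)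

theorem isClosed_Vof (he : IsCoord e) (I) : IsClosed (Vof e I) := (he _).mpr ⟨I, rfl⟩

theorem Vof_Iof (he : IsCoord e) {s : Set M} (hs : IsClosed s) : Vof e (Iof e s) = s := by
  obtain ⟨S, hS⟩ := (he s).mp hs
  apply Set.Subset.antisymm
  · intro v hv
    rw [hS]
    intro p hp
    exact hv p (fun w hw => by rw [hS] at hw; exact hw p hp)
  · intro v hv p hp
    exact hp v hv

theorem Iof_closure (he : IsCoord e) (s : Set M) : Iof e (closure s) = Iof e s := by
  apply le_antisymm (Iof_anti subset_closure)
  intro p hp v hv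
  have : closure s ⊆ Vof e (Ideal.span {p}) := by
    apply closure_minimal _ (isClosed_Vof he _)
    intro w hw q hq
    obtain ⟨a, rfl⟩ := Ideal.mem_span_singleton'.mp hq
    rw [map_mul, hp w hw, mul_zero]
  exact this hv p (Ideal.mem_span_singleton_self p)

theorem Iof_prime (he : IsCoord e) {s : Set M} (hs : IsIrreducible s) : (Iof e s).IsPrime := by
  constructor
  · intro h
    obtain ⟨v, hv⟩ := hs.1
    have : (1 : MvPolynomial ι K) ∈ Iof e s := by rw [h]; trivial
    simpa using this v hv
  · intro p q hpq
    have hcl : ∀ p : MvPolynomial ι K, IsClosed {v | eval (e v) p = 0} := fun p =>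
      (he _).mpr ⟨{p}, by simp⟩
    have := isPreirreducible_iff_isClosed_union_isClosed.mp hs.2 _ _ (hcl p) (hcl q) (by
      intro v hv
      have := hpq v hv
      rw [map_mul, mul_eq_zero] at this
      exact this)
    exact this

theorem Vof_irred [IsAlgClosed K] (he : IsCoord e) (P : Ideal (MvPolynomial ι K)) [hP : P.IsPrime] :
    Iof e (Vof e P) = P ∧ IsIrreducible (Vof e P) := by
  have h1 : Iof e (Vof e P) = P := by
    have := MvPolynomial.IsPrime.vanishingIdeal_zeroLocus (K := K) P
    conv_rhs => rw [← this]
    ext p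
    rw [mem_vanishingIdeal_iff, mem_Iof]
    constructor
    · intro h x hx
      have := h (e.symm x) (by
        intro q hq
        have := hx q hq
        simpa [aeval_eq_eval] using this)
      simpa [aeval_eq_eval] using this
    · intro h v hv
      have := h (e v) (by
        intro q hq
        have := hv q hq
        simpa [aeval_eq_eval] using this)
      simpa [aeval_eq_eval] using this
  refine ⟨h1, ?_, ?_⟩
  · rw [Set.nonempty_iff_ne_empty]
    intro h
    apply hP.ne_top
    rw [← h1, h, Ideal.eq_top_iff_one]
    intro v hv
    exact hv.elim
  · rw [isPreirreducible_iff_isClosed_union_isClosed]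
    intro z1 z2 hz1 hz2 hsub
    by_contra! hc
    obtain ⟨hc1, hc2⟩ := hc
    rw [← Vof_Iof he hz1] at hc1
    rw [← Vof_Iof he hz2] at hc2
    have g1 : ∃ p ∈ Iof e z1, p ∉ P := by
      by_contra! h
      exact hc1 (fun v hv p hp => hv p (h p hp))
    have g2 : ∃ p ∈ Iof e z2, p ∉ P := by
      by_contra! h
      exact hc2 (fun v hv p hp => hv p (h p hp))
    obtain ⟨p, hp, hpP⟩ := g1
    obtain ⟨q, hq, hqP⟩ := g2
    have : p * q ∈ P := by
      rw [← h1]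
      intro v hv
      rw [map_mul]
      rcases hsub hv with h | h
      · rw [hp v h, zero_mul]
      · rw [hq v h, mul_zero]
    exact (hP.mem_or_mem this).elim hpP hqP

theorem noeth (he : IsCoord e) : NoetherianSpace M := by
  refine ((noetherianSpace_TFAE M).out 0 1 : NoetherianSpace M ↔ WellFoundedLT (Closeds M)).mpr ?_
  have : StrictAnti (fun C : Closeds M => Iof e (C : Set M)) := by
    intro C D h
    refine lt_of_le_of_ne (Iof_anti h.le) fun heq => h.ne ?_
    apply Closeds.ext
    rw [← Vof_Iof he C.isClosed, ← Vof_Iof he D.isClosed]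
    exact congrArg (Vof e) heq.symm
  exact this.wellFoundedLT

theorem dim_le (he : IsCoord e) (T : Set M) (hT : IsClosed T) :
    dimSet T ≤ ringKrullDim (MvPolynomial ι K ⧸ Iof e T) := by
  rw [dimSet, hT.closure_eq, ringKrullDim_quotient, topologicalKrullDim, ← Order.krullDim_orderDual]
  let f : (IrreducibleCloseds T)ᵒᵈ → PrimeSpectrum.zeroLocus (R := MvPolynomial ι K) (Iof e T) := fun C =>
    ⟨⟨Iof e ((↑) '' (OrderDual.ofDual C).carrier),
      Iof_prime he ((OrderDual.ofDual C).isIrreducible.image _ continuous_subtype_val.continuousOn)⟩,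
      Iof_anti (by simp)⟩
  refine Order.krullDim_le_of_strictMono f ?_
  intro C D h
  have h' : OrderDual.ofDual D < OrderDual.ofDual C := h
  have hcl : ∀ C : IrreducibleCloseds T, IsClosed (((↑) : T → M) '' C.carrier) := fun C =>
    hT.isClosedEmbedding_subtypeVal.isClosedMap _ C.isClosed
  refine lt_of_le_of_ne (Iof_anti (Set.image_mono h'.le)) fun heq => h'.ne ?_
  have heq2 : Iof e (((↑) : T → M) '' (OrderDual.ofDual C).carrier) = Iof e ((↑) '' (OrderDual.ofDual D).carrier) := by
    have := congrArg (fun x => x.1.asIdeal) heq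
    exact this
  have : (((↑) : T → M) '' (OrderDual.ofDual C).carrier) = ((↑) '' (OrderDual.ofDual D).carrier) := by
    rw [← Vof_Iof he (hcl (OrderDual.ofDual C)), ← Vof_Iof he (hcl (OrderDual.ofDual D)), heq2]
  apply IrreducibleCloseds.ext
  exact (Subtype.val_injective.image_injective this).symm

theorem dim_ge [IsAlgClosed K] (he : IsCoord e) (T : Set M) (hT : IsClosed T) :
    ringKrullDim (MvPolynomial ι K ⧸ Iof e T) ≤ dimSet T := by
  rw [dimSet, hT.closure_eq, ringKrullDim_quotient, topologicalKrullDim, ← Order.krullDim_orderDual]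
  have hsub : ∀ P : PrimeSpectrum.zeroLocus (R := MvPolynomial ι K) (Iof e T), Vof e P.1.asIdeal ⊆ T := by
    intro P v hv
    rw [← Vof_Iof he hT]
    intro p hp
    exact hv p (P.2 hp)
  let f : (PrimeSpectrum.zeroLocus (R := MvPolynomial ι K) (Iof e T))ᵒᵈ → IrreducibleCloseds T := fun P =>
    { carrier := (↑) ⁻¹' (Vof e (OrderDual.ofDual P).1.asIdeal)
      isIrreducible' := by
        have := (Vof_irred he (OrderDual.ofDual P).1.asIdeal).2
        have hT' : Topology.IsClosedEmbedding ((↑) : T → M) := hT.isClosedEmbedding_subtypeVal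
        have h1 : ((↑) : T → M) '' ((↑) ⁻¹' (Vof e (OrderDual.ofDual P).1.asIdeal)) = Vof e (OrderDual.ofDual P).1.asIdeal := by
          rw [Subtype.image_preimage_coe, Set.inter_eq_right]
          exact hsub _
        refine ⟨?_, ?_⟩
        · obtain ⟨v, hv⟩ := this.1
          exact ⟨⟨v, hsub _ hv⟩, hv⟩
        · rw [isPreirreducible_iff_isClosed_union_isClosed]
          intro z1 z2 hz1 hz2 hs
          have h2 := isPreirreducible_iff_isClosed_union_isClosed.mp this.2 _ _
            (hT'.isClosedMap _ hz1) (hT'.isClosedMap _ hz2) (by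
              rw [← h1, ← Set.image_union]; exact Set.image_mono hs)
          refine h2.imp ?_ ?_
          · intro h x hx
            obtain ⟨y, hy, hxy⟩ := h hx
            rwa [← Subtype.ext hxy]
          · intro h x hx
            obtain ⟨y, hy, hxy⟩ := h hx
            rwa [← Subtype.ext hxy]
      isClosed' := (isClosed_Vof he _).preimage continuous_subtype_val }
  refine Order.krullDim_le_of_strictMono f ?_
  intro P Q h
  have h' : OrderDual.ofDual Q < OrderDual.ofDual P := h
  have hle : (OrderDual.ofDual Q).1.asIdeal ≤ (OrderDual.ofDual P).1.asIdeal := h'.le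
  refine lt_of_le_of_ne (fun v hv p hp => hv p (hle hp)) fun heq => ?_
  have h3 : (((↑) : T → M) ⁻¹' (Vof e (OrderDual.ofDual P).1.asIdeal)) = ((↑) ⁻¹' (Vof e (OrderDual.ofDual Q).1.asIdeal)) :=
    congrArg (fun C : IrreducibleCloseds T => (C : Set T)) heq
  rw [Set.preimage_eq_preimage' (by simpa using hsub _) (by simpa using hsub _)] at h3
  have h4 : (OrderDual.ofDual P).1.asIdeal = (OrderDual.ofDual Q).1.asIdeal := by
    rw [← (Vof_irred he (OrderDual.ofDual P).1.asIdeal).1, ← (Vof_irred he (OrderDual.ofDual Q).1.asIdeal).1, h3]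
  apply h'.ne
  apply Subtype.ext
  exact PrimeSpectrum.ext h4.symm

theorem dimSet_mono {s t : Set M} (h : closure s ⊆ closure t) : dimSet s ≤ dimSet t := by
  exact (Topology.IsEmbedding.inclusion h).isInducing.topologicalKrullDim_le

end
end
end TL

namespace TL
noncomputable section
open MvPolynomial TopologicalSpace

/-- index type of coefficients -/
abbrev Idx (r : ℕ) {n : ℕ} (d : Fin n → ℕ) : Type := Σ i : Fin n, Mon r (d i)

/-- form with given coefficients -/
def form {E : Type*} [CommRing E] {r n : ℕ} {d : Fin n → ℕ} (y : Idx r d → E) (i : Fin n) :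
    MvPolynomial (Fin (r+1)) E := ∑ m : Mon r (d i), monomial m.1 (y ⟨i, m⟩)

theorem form_hom {E : Type*} [CommRing E] {r n : ℕ} {d : Fin n → ℕ} (y : Idx r d → E) (i : Fin n) :
    (form y i).IsHomogeneous (d i) :=
  IsHomogeneous.sum _ _ _ fun m _ => isHomogeneous_monomial _ m.2

theorem coeff_form {E : Type*} [CommRing E] {r n : ℕ} {d : Fin n → ℕ} (y : Idx r d → E) (i : Fin n)
    (m : Mon r (d i)) : coeff m.1 (form y i) = y ⟨i, m⟩ := by
  classical
  rw [form, coeff_sum, Finset.sum_eq_single m]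
  · simp
  · intro b _ hb
    rw [coeff_monomial, if_neg]
    exact fun h => hb (Subtype.ext h)
  · simp

theorem form_unique {E : Type*} [CommRing E] {r n : ℕ} {d : Fin n → ℕ} (y : Idx r d → E) (i : Fin n)
    (p : MvPolynomial (Fin (r+1)) E) (hp : p.IsHomogeneous (d i))
    (h : ∀ m : Mon r (d i), coeff m.1 p = y ⟨i, m⟩) : form y i = p := by
  ext m
  by_cases hm : m.degree = d i
  · rw [coeff_form y i ⟨m, hm⟩, h ⟨m, hm⟩]
  · rw [(form_hom y i).coeff_eq_zero hm, hp.coeff_eq_zero hm]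

theorem map_form {E E' : Type*} [CommRing E] [CommRing E'] (f : E →+* E') {r n : ℕ} {d : Fin n → ℕ}
    (y : Idx r d → E) (i : Fin n) : map f (form y i) = form (fun j => f (y j)) i := by
  simp [form, map_sum, map_monomial]

theorem PH_open {K : Type*} [Field K] {r n h : ℕ} {d : Fin n → ℕ} {J : Type*} (j : J → Fin n)
    {E₀ : Type*} [Field E₀] [Algebra K E₀] (y₀ : Idx r d → E₀)
    (h0 : PH K h (fun s => form y₀ (j s))) :
    ∃ q : MvPolynomial (Idx r d) K, aeval y₀ q ≠ 0 ∧ ∀ (E : Type _) [Field E] [Algebra K E]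
      (y : Idx r d → E), aeval y q ≠ 0 → PH K h (fun s => form y (j s)) := by
  obtain ⟨c, N, hN⟩ := h0
  let G : J ⊕ Fin h → MvPolynomial (Fin (r+1)) (MvPolynomial (Idx r d) K) :=
    Sum.elim (fun s => form (fun i => X i) (j s)) (fun s => ∑ i, C (C (c s i)) * X i)
  have hG : ∀ (E : Type _) [Field E] [Algebra K E] (y : Idx r d → E),
      (fun s => map (aeval y : MvPolynomial (Idx r d) K →ₐ[K] E).toRingHom (G s)) =
        Sum.elim (fun s => form y (j s)) (fun s => linf (c s)) := by
    intro E _ _ y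
    funext s
    rcases s with s | s
    · simp [G, map_form]
    · simp [G, linf, map_sum]
  obtain ⟨q, hq, hq'⟩ := elim (k := K) G (Sum.elim (fun s => d (j s)) (fun _ => 1)) (by
    rintro (s | s)
    · exact form_hom _ _
    · refine IsHomogeneous.sum _ _ _ fun i _ => ?_
      simpa using (isHomogeneous_C _ _).mul (isHomogeneous_X _ i)) N y₀ (by
        have : (fun s => map (aeval y₀ : MvPolynomial (Idx r d) K →ₐ[K] E₀).toRingHom (G s)) =
        Sum.elim (fun s => form y₀ (j s)) (fun s => linf (c s)) := by
          funext s
          rcases s with s | s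
          · simp [G, map_form]
          · simp [G, linf, map_sum]
        rw [this]; exact hN)
  refine ⟨q, hq, fun E _ _ y hy => ⟨c, N, ?_⟩⟩
  rw [← hG]
  exact hq' E y hy

/-- coordinates on the tuple space -/
def crd (K : Type*) [Field K] (r n : ℕ) (d : Fin n → ℕ) :
    tupleSpace K r n d ≃ₗ[K] (Idx r d → K) where
  toFun F j := coeff j.2.1 (F j.1).1
  map_add' p q := by ext m; simp
  map_smul' c p := by ext m; simp
  invFun y i := ⟨form y i, form_hom y i⟩
  left_inv F := by
    funext i
    apply Subtype.ext
    exact form_unique (fun j => coeff j.2.1 (F j.1).1) _ _ ((F i).2) fun _ => rfl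
  right_inv y := by
    funext j
    exact coeff_form y j.1 j.2

theorem form_crd {K : Type*} [Field K] {r n : ℕ} {d : Fin n → ℕ} (F : tupleSpace K r n d) (i) :
    form (crd K r n d F) i = (F i).1 :=
  form_unique _ _ _ ((F i).2) fun _ => rfl

theorem isCoord (K : Type*) [Field K] (r n : ℕ) (d : Fin n → ℕ) :
    IsCoord (K := K) (crd K r n d).toEquiv := fun s => zariski_closed_iff (crd K r n d) s

/-- `PH` in terms of dimension, over an algebraically closed field -/
theorem PH_iff {K : Type*} [Field K] [IsAlgClosed K] {r n : ℕ} {d : Fin n → ℕ} {J : Type}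
    (j : J → Fin n) (F : tupleSpace K r n d) (h : ℕ) :
    PH K h (fun s => form (crd K r n d F) (j s)) ↔
      ¬ ((h + 1 : ℕ) : WithBot ℕ∞) ≤ ringKrullDim (MvPolynomial (Fin (r + 1)) K ⧸
        Ideal.span (Set.range (fun s => (F (j s)).1))) := by
  have he : (fun s => form (crd K r n d F) (j s)) = (fun s => (F (j s)).1) := by
    funext s; exact form_crd F _
  rw [he]
  have hF : ∀ s, (F (j s)).1.IsHomogeneous (d (j s)) := fun s => (F (j s)).2
  constructor
  · intro hP hd
    have := hd.trans (dim_le_of_PH h _ (fun s => d (j s)) hF hP)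
    have := WithBot.coe_le_coe.mp this
    norm_cast at this
    omega
  · intro hd
    by_contra hP
    have : Infinite K := IsAlgClosed.instInfinite
    obtain ⟨l, hl, hl1, -⟩ := chain_of_not_PH (K := K) h _ _ hF hP
    apply hd
    rw [← hl]
    exact dim_ge_of_chain _ l hl1

/-- the locus where `PH` fails is closed -/
theorem notPH_closed {K : Type*} [Field K] {r n h : ℕ} {d : Fin n → ℕ} {J : Type*} (j : J → Fin n) :
    IsClosed {F : tupleSpace K r n d | ¬ PH K h (fun s => form (crd K r n d F) (j s))} := by
  refine (isCoord K r n d _).mpr ⟨{q | ∀ F : tupleSpace K r n d, ¬ PH K h (fun s => form (crd K r n d F) (j s)) →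
    eval (crd K r n d F) q = 0}, ?_⟩
  ext F
  constructor
  · intro hF q hq
    exact hq F hF
  · intro hF hP
    obtain ⟨q, hq, hq'⟩ := PH_open j _ hP
    apply hq
    rw [aeval_eq_eval]
    apply hF
    intro F' hF'
    by_contra hc
    exact hF' (hq' K _ (by rw [aeval_eq_eval]; exact hc))

end
end TL

namespace TL
noncomputable section
open MvPolynomial

theorem sel {Ω V ι : Type*} [Field Ω] [AddCommGroup V] [Module Ω V] [Fintype ι] (v : ι → V) :
    ∃ (I : Finset ι) (a : ι → ι → Ω), (∀ c : ι → Ω, ∑ i ∈ I, c i • v i = 0 → ∀ i ∈ I, c i = 0) ∧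
      ∀ j, v j = ∑ i ∈ I, a j i • v i := by
  classical
  obtain ⟨b, -, -, hb, hlin⟩ := exists_linearIndepOn_extension (K := Ω) (v := v)
    (linearIndepOn_empty Ω v) (Set.subset_univ ∅)
  have hbf : b.Finite := Set.toFinite b
  obtain ⟨I, rfl⟩ := hbf.exists_finset_coe
  have h2 : ∀ j, ∃ c : ι → Ω, v j = ∑ i ∈ I, c i • v i := by
    intro j
    have := hb ⟨j, trivial, rfl⟩
    rw [SetLike.mem_coe, Submodule.mem_span_image_finset_iff_exists_fun] at this
    obtain ⟨c, hc⟩ := this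
    refine ⟨fun i => if h : i ∈ I then c ⟨i, h⟩ else 0, ?_⟩
    rw [← hc, ← Finset.sum_coe_sort I]
    simp
  choose a ha using h2
  exact ⟨I, a, fun c hc => linearIndepOn_finset_iff.mp hlin c hc, ha⟩

section
variable {K Ω : Type*} [Field K] [Field Ω] [Algebra K Ω] {σ : Type*}

/-- coefficients in kB -/
def CoefIn (K : Type*) {Ω : Type*} [Field K] [Field Ω] [Algebra K Ω] {σ : Type*} (B : Set Ω) (f : MvPolynomial σ Ω) : Prop := ∀ m, coeff m f ∈ kB K B

theorem CoefIn.mono {B B' : Set Ω} (h : B ⊆ B') {f : MvPolynomial σ Ω} (hf : CoefIn K B f) :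
    CoefIn K B' f := fun m => kB_mono h (hf m)

theorem coefIn_iff {B : Set Ω} {f : MvPolynomial σ Ω} :
    CoefIn K B f ↔ ∃ g : MvPolynomial σ (kB K B), f = map (algebraMap (kB K B) Ω) g := by
  constructor
  · intro h
    have : f ∈ Set.range (map (algebraMap (kB K B) Ω) : MvPolynomial σ (kB K B) →+* _) := by
      rw [mem_range_map_iff_coeffs_subset]
      intro x hx
      obtain ⟨m, hm, rfl⟩ := mem_coeffs_iff.mp hx
      exact ⟨⟨_, h m⟩, rfl⟩
    obtain ⟨g, hg⟩ := this
    exact ⟨g, hg.symm⟩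
  · rintro ⟨g, rfl⟩ m
    rw [coeff_map]
    exact (coeff m g).2

/-- ideal defined over kB -/
def DefOver (K : Type*) {Ω : Type*} [Field K] [Field Ω] [Algebra K Ω] {σ : Type*} (B : Set Ω)
    (P : Ideal (MvPolynomial σ Ω)) : Prop := P ≤ Ideal.span {f | f ∈ P ∧ CoefIn K B f}

theorem DefOver.mono {B B' : Set Ω} (h : B ⊆ B') {P : Ideal (MvPolynomial σ Ω)}
    (hP : DefOver K B P) : DefOver K B' P :=
  hP.trans (Ideal.span_mono fun _ hf => ⟨hf.1, hf.2.mono h⟩)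

theorem defOver_iff {B : Set Ω} {P : Ideal (MvPolynomial σ Ω)} :
    DefOver K B P ↔ P ≤ (P.comap (map (algebraMap (kB K B) Ω))).map (map (algebraMap (kB K B) Ω)) := by
  constructor
  · intro h
    refine h.trans (Ideal.span_le.mpr ?_)
    rintro f ⟨hf, hc⟩
    obtain ⟨g, rfl⟩ := coefIn_iff.mp hc
    exact Ideal.mem_map_of_mem _ hf
  · intro h
    refine h.trans (Ideal.map_le_iff_le_comap.mpr ?_)
    intro g hg
    exact Ideal.subset_span ⟨hg, coefIn_iff.mpr ⟨g, rfl⟩⟩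

theorem defOver_span {B : Set Ω} {S : Set (MvPolynomial σ Ω)} (hS : ∀ f ∈ S, CoefIn K B f) :
    DefOver K B (Ideal.span S) :=
  Ideal.span_le.mpr fun f hf => Ideal.subset_span ⟨Ideal.subset_span hf, hS f hf⟩

theorem defOver_sup {B : Set Ω} {P Q : Ideal (MvPolynomial σ Ω)} (hP : DefOver K B P)
    (hQ : DefOver K B Q) : DefOver K B (P ⊔ Q) := by
  refine sup_le (hP.trans (Ideal.span_mono fun f hf => ⟨?_, hf.2⟩)) (hQ.trans (Ideal.span_mono fun f hf => ⟨?_, hf.2⟩))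
  · exact Ideal.mem_sup_left hf.1
  · exact Ideal.mem_sup_right hf.1

theorem defOver_minimal [IsAlgClosed Ω] [Finite σ] {B : Set Ω} {I P : Ideal (MvPolynomial σ Ω)}
    (hI : DefOver K B I) (hP : P ∈ I.minimalPrimes) : DefOver K B P :=
  defOver_iff.mpr (minimal_descends I P (defOver_iff.mp hI) hP)

end

/-- the induction of the main argument -/
theorem ind {K Ω : Type*} [Field K] [Field Ω] [Algebra K Ω] [IsAlgClosed Ω] {r n : ℕ}
    {d : Fin n → ℕ} (F : Fin n → MvPolynomial (Fin (r+1)) Ω) (hF : ∀ i, (F i).IsHomogeneous (d i))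
    (PC : Ideal (MvPolynomial (Fin (r+1)) Ω)) [PC.IsPrime] (hFP : ∀ i, F i ∈ PC)
    (I : Finset (Fin (r+1))) (b : ℕ) (hb : I.card = b + 1)
    (hI : ∀ c : Fin (r+1) → Ω, ∑ i ∈ I, C (c i) * X i ∈ PC → ∀ i ∈ I, c i = 0)
    (P0 : Ideal (MvPolynomial (Fin (r+1)) Ω)) [P0.IsPrime] (hP0 : P0 ≤ PC) (B0 : Finset Ω)
    (hdef : DefOver K (B0 : Set Ω) P0) (S : Finset (Fin n)) :
    ∃ (B : Finset Ω) (P : PrimeSpectrum (MvPolynomial (Fin (r+1)) Ω)) (T : Finset (Fin n))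
      (l : LTSeries (PrimeSpectrum (MvPolynomial (Fin (r+1)) Ω))),
      P.asIdeal ≤ PC ∧ DefOver K (B : Set Ω) P.asIdeal ∧ (∀ j ∈ S, F j ∈ P.asIdeal) ∧
      (∀ j ∈ S, CoefIn K (B : Set Ω) (F j)) ∧ T ⊆ S ∧ P0 ≤ l.head.asIdeal ∧ l.last = P ∧
      l.length = T.card ∧
      B.card + ∑ j ∈ S \ T, (b * d j + 1) ≤ B0.card + ∑ j ∈ S, Fintype.card (Mon r (d j)) := by
  classical
  induction S using Finset.induction_on with
  | empty =>
    exact ⟨B0, ⟨P0, inferInstance⟩, ∅, RelSeries.singleton _ ⟨P0, inferInstance⟩, hP0, hdef,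
      by simp, by simp, by simp, by simp, by simp, by simp, by simp⟩
  | insert s S hs ih =>
    obtain ⟨B, P, T, l, h1, h2, h3, h4, h5, h6, h7, h8, h9⟩ := ih
    by_cases hmem : F s ∈ P.asIdeal
    · obtain ⟨t, c, g, ht, hFs⟩ := descend_form P.asIdeal (defOver_iff.mp h2) I b hb
        (fun c hc => hI c (h1 hc)) (d s) (F s) hmem (hF s)
      let B' := B ∪ Finset.univ.image c
      have hBB : (B : Set Ω) ⊆ B' := by
        intro x hx; simp only [B', Finset.coe_union]; exact Or.inl hx
      refine ⟨B', P, T, l, h1, h2.mono hBB, ?_, ?_, h5.trans (Finset.subset_insert _ _), h6, h7, h8, ?_⟩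
      · intro j hj
        rcases Finset.mem_insert.mp hj with rfl | hj
        · exact hmem
        · exact h3 j hj
      · intro j hj
        rcases Finset.mem_insert.mp hj with rfl | hj
        · intro m
          rw [hFs, coeff_sum]
          refine sum_mem fun i _ => ?_
          rw [coeff_C_mul, coeff_map]
          refine mul_mem (subset_kB _ ?_) (kB_mono hBB (coeff m (g i)).2)
          simp [B']
        · exact (h4 j hj).mono hBB
      · have hsT : s ∉ T := fun h => hs (h5 h)
        rw [Finset.insert_sdiff_of_notMem _ hsT, Finset.sum_insert (by simp [hs]), Finset.sum_insert hs]
        have : B'.card ≤ B.card + t := by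
          refine (Finset.card_union_le _ _).trans ?_
          have := Finset.card_image_le (s := Finset.univ) (f := c)
          simp at this
          omega
        omega
    · let B' := B ∪ Finset.univ.image (fun m : Mon r (d s) => coeff m.1 (F s))
      have hBB : (B : Set Ω) ⊆ B' := by
        intro x hx; simp only [B', Finset.coe_union]; exact Or.inl hx
      have hcF : CoefIn K (B' : Set Ω) (F s) := by
        intro m
        by_cases hm : m.degree = d s
        · apply subset_kB
          simp only [B', Finset.coe_union, Finset.coe_image]
          exact Or.inr ⟨⟨m, hm⟩, by simp⟩
        · rw [(hF s).coeff_eq_zero hm]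
          exact zero_mem _
      have hsup : P.asIdeal ⊔ Ideal.span {F s} ≤ PC := sup_le h1 (by
        rw [Ideal.span_singleton_le_iff_mem]; exact hFP s)
      obtain ⟨P', hP', hP'C⟩ := Ideal.exists_minimalPrimes_le hsup
      have hpr : P'.IsPrime := hP'.1.1
      have hle : P.asIdeal ≤ P' := le_sup_left.trans hP'.1.2
      have hFm : F s ∈ P' := hP'.1.2 (Ideal.mem_sup_right (Ideal.mem_span_singleton_self _))
      have hlt : l.last < (⟨P', hpr⟩ : PrimeSpectrum (MvPolynomial (Fin (r+1)) Ω)) := by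
        rw [h7]
        exact lt_of_le_of_ne hle fun h => hmem (by rw [h]; exact hFm)
      refine ⟨B', ⟨P', hpr⟩, insert s T, l.snoc _ hlt, hP'C, ?_, ?_, ?_, Finset.insert_subset_insert _ h5, ?_, ?_, ?_, ?_⟩
      · exact defOver_minimal (defOver_sup (h2.mono hBB) (defOver_span (by
          rintro f rfl; exact hcF))) hP'
      · intro j hj
        rcases Finset.mem_insert.mp hj with rfl | hj
        · exact hFm
        · exact hle (h3 j hj)
      · intro j hj
        rcases Finset.mem_insert.mp hj with rfl | hj
        · exact hcF
        · exact (h4 j hj).mono hBB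
      · simpa using h6
      · simp
      · have hsT : s ∉ T := fun h => hs (h5 h)
        simp [Finset.card_insert_of_notMem hsT, h8]
      · rw [Finset.sum_insert hs]
        have e1 : insert s S \ insert s T = S \ T := by
          ext x
          simp only [Finset.mem_sdiff, Finset.mem_insert]
          constructor
          · tauto
          · rintro ⟨hx, hx'⟩
            refine ⟨Or.inr hx, ?_⟩
            rintro (rfl | h)
            · exact hs hx
            · exact hx' h
        rw [e1]
        have : B'.card ≤ B.card + Fintype.card (Mon r (d s)) := by
          refine (Finset.card_union_le _ _).trans ?_
          have := Finset.card_image_le (s := Finset.univ) (f := (fun m : Mon r (d s) => coeff m.1 (F s)))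
          rw [Finset.card_univ] at this
          omega
        omega

end
end TL

namespace TL
noncomputable section
open MvPolynomial

theorem arith {n r b : ℕ} (d : Fin (n+1) → ℕ) (T : Finset (Fin (n+1))) (hd : ∀ i, 1 ≤ d i)
    (hD : ∀ i, d i ≤ d (Fin.last n)) (hT : Fin.last n ∉ T) (hTc : T.card + 2 ≤ b + 1) (hb : 2 ≤ b)
    (hbr : b ≤ r) (hn : r ≤ n + 1) :
    ∑ j, (d j + 1) + 1 + (b + 1) * (r - b) ≤ ∑ j ∈ Finset.univ \ T, (b * d j + 1) + 2 * (r - 1) := by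
  classical
  have e1 : ∑ j, (d j + 1) = ∑ j ∈ Finset.univ \ T, (d j + 1) + ∑ j ∈ T, (d j + 1) :=
    (Finset.sum_sdiff (Finset.subset_univ T)).symm
  rw [e1]
  have hc : (Finset.univ \ T).card = n + 1 - T.card := by
    rw [Finset.card_sdiff_of_subset (Finset.subset_univ _)]; simp
  have h2 : ∑ j ∈ T, d j ≤ T.card * d (Fin.last n) := by
    have := Finset.sum_le_card_nsmul T d _ (fun i _ => hD i)
    simpa using this
  have h3 : d (Fin.last n) + (n - T.card) ≤ ∑ j ∈ Finset.univ \ T, d j := by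
    rw [← Finset.add_sum_erase _ d (by simpa using hT : Fin.last n ∈ Finset.univ \ T)]
    have := Finset.card_nsmul_le_sum ((Finset.univ \ T).erase (Fin.last n)) d 1 (fun i _ => hd i)
    rw [Finset.card_erase_of_mem (by simpa using hT), hc] at this
    simp only [smul_eq_mul, mul_one] at this
    change d (Fin.last n) + (n - T.card) ≤ d (Fin.last n) + ((Finset.univ \ T).erase (Fin.last n)).sum d
    omega
  simp only [Finset.sum_add_distrib, ← Finset.mul_sum, Finset.sum_const, hc, smul_eq_mul, mul_one]
  have hD1 := hd (Fin.last n)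
  generalize d (Fin.last n) = D at *
  generalize ∑ j ∈ Finset.univ \ T, d j = S1 at *
  generalize ∑ j ∈ T, d j = S2 at *
  generalize T.card = t at *
  obtain ⟨u, rfl⟩ : ∃ u, b = t + 1 + u := ⟨b - (t+1), by omega⟩
  obtain ⟨v, rfl⟩ : ∃ v, r = t + 1 + u + v := ⟨r - (t+1+u), by omega⟩
  obtain ⟨w, rfl⟩ : ∃ w, n = t + u + v + w := ⟨n - (t+u+v), by omega⟩
  rw [show t + 1 + u + v - (t + 1 + u) = v by omega, show t + 1 + u + v - 1 = t + u + v by omega]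
  rw [show t + u + v + w - t = u + v + w by omega] at h3
  obtain ⟨D', rfl⟩ : ∃ D', D = D' + 1 := ⟨D - 1, by omega⟩
  have h4 : (t + u) * (D' + 1 + (u + v + w)) ≤ (t + u) * S1 := Nat.mul_le_mul_left _ h3
  have h6 : 0 ≤ u * D' := Nat.zero_le _
  have h7 : 1 ≤ t + u := by omega
  rw [show t + u + v + w + 1 - t = u + v + w + 1 by omega]
  nlinarith [Nat.zero_le (u * w), Nat.zero_le (t * w), Nat.zero_le (u*u), Nat.zero_le (t*u), Nat.zero_le (u*v)]

/-- main algebraic statement -/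
theorem main_alg {K Ω : Type*} [Field K] [Infinite K] [Field Ω] [Algebra K Ω] [IsAlgClosed Ω] {r n : ℕ}
    {d : Fin (n+1) → ℕ} (F : Fin (n+1) → MvPolynomial (Fin (r+1)) Ω)
    (hF : ∀ i, (F i).IsHomogeneous (d i))
    (hd : ∀ i, 1 ≤ d i) (hD : ∀ i, d i ≤ d (Fin.last n)) (hn : r ≤ n + 1)
    (hP1 : ¬ PH K 1 F) (hP2 : PH K 2 (fun i : Fin n => F i.castSucc)) :
    (∃ v w : Fin (r+1) → Ω, LinearIndependent Ω ![v, w] ∧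
      ∀ i s t, eval (fun j => s * v j + t * w j) (F i) = 0) ∨
    ∃ B : Finset Ω, (∀ i, CoefIn K (B : Set Ω) (F i)) ∧
      B.card + ∑ j, (d j + 1) + 1 ≤ ∑ j, Fintype.card (Mon r (d j)) + 2 * (r - 1) := by
  classical
  obtain ⟨l0, hl0, hl0F, hl0irr⟩ := chain_of_not_PH (K := K) 1 F d hF hP1
  -- the three primes
  obtain ⟨PC, hPC, hPCF, P1, hP1', hlt1, hlt2⟩ : ∃ PC : Ideal (MvPolynomial (Fin (r+1)) Ω),
      ∃ _ : PC.IsPrime, (∀ i, F i ∈ PC) ∧ ∃ P1 : Ideal (MvPolynomial (Fin (r+1)) Ω),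
      ∃ _ : P1.IsPrime, PC < P1 ∧ P1 < irr Ω r := by
    refine ⟨l0.head.asIdeal, l0.head.isPrime, fun i => hl0F (Ideal.subset_span ⟨i, rfl⟩),
      (l0 ⟨1, by omega⟩).asIdeal, (l0 ⟨1, by omega⟩).isPrime, ?_, ?_⟩
    · exact l0.strictMono (show (0 : Fin (l0.length + 1)) < ⟨1, by omega⟩ by simp [Fin.lt_def])
    · rw [← hl0irr]
      exact l0.strictMono (show (⟨1, by omega⟩ : Fin (l0.length + 1)) < Fin.last _ by simp [Fin.lt_def, hl0])
  have hirr : (irr Ω r).IsPrime := (irr_max Ω r).isPrime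
  -- the span
  obtain ⟨I, a, hIind, ha⟩ := sel (Ω := Ω) (fun i : Fin (r+1) => Ideal.Quotient.mkₐ Ω PC (X i))
  have hI : ∀ c : Fin (r+1) → Ω, ∑ i ∈ I, C (c i) * X i ∈ PC → ∀ i ∈ I, c i = 0 := by
    intro c hc
    apply hIind c
    have : Ideal.Quotient.mkₐ Ω PC (∑ i ∈ I, C (c i) * X i) = 0 := Ideal.Quotient.eq_zero_iff_mem.mpr hc
    rw [map_sum] at this
    rw [← this]
    refine Finset.sum_congr rfl fun i _ => ?_
    rw [← smul_eq_C_mul, map_smul]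
  have ha' : ∀ j, X j - ∑ i ∈ I, C (a j i) * X i ∈ PC := by
    intro j
    rw [← Ideal.Quotient.eq_zero_iff_mem]
    change Ideal.Quotient.mkₐ Ω PC _ = 0
    rw [map_sub, map_sum, ha j, sub_eq_zero]
    refine Finset.sum_congr rfl fun i _ => ?_
    rw [← smul_eq_C_mul, map_smul]
  have hdelta : ∀ j ∈ I, ∀ i ∈ I, a j i = if i = j then 1 else 0 := by
    intro j hj i hi
    have := hI (fun i => (if i = j then 1 else 0) - a j i) (by
      have h := ha' j
      convert h using 1
      simp only [map_sub, sub_mul, Finset.sum_sub_distrib]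
      congr 1
      rw [Finset.sum_eq_single j]
      · simp
      · intro b _ hb; simp [hb]
      · intro h; exact absurd hj h) i hi
    exact (sub_eq_zero.mp this).symm
  let ψ : MvPolynomial (Fin (r+1)) Ω →ₐ[Ω] MvPolynomial (Fin (r+1)) Ω :=
    aeval fun j => ∑ i ∈ I, C (a j i) * X i
  have hψX : ∀ j, ψ (X j) = ∑ i ∈ I, C (a j i) * X i := fun j => by simp [ψ]
  have hψI : ∀ j ∈ I, ψ (X j) = X j := by
    intro j hj
    rw [hψX, Finset.sum_eq_single j]
    · rw [hdelta j hj j hj]; simp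
    · intro b hb hbj
      rw [hdelta j hj b hb, if_neg hbj]; simp
    · intro h; exact absurd hj h
  let Λ : Ideal (MvPolynomial (Fin (r+1)) Ω) := RingHom.ker ψ
  have hΛp : Λ.IsPrime := RingHom.ker_isPrime _
  have hΛgen : Λ = Ideal.span (Set.range fun j => X j - ∑ i ∈ I, C (a j i) * X i) := by
    apply le_antisymm
    · intro f hf
      set Q := Ideal.span (Set.range fun j => (X j : MvPolynomial (Fin (r+1)) Ω) - ∑ i ∈ I, C (a j i) * X i)
      have h1 : (Ideal.Quotient.mkₐ Ω Q).comp ψ = Ideal.Quotient.mkₐ Ω Q := by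
        ext j
        rw [AlgHom.comp_apply, hψX]
        change Ideal.Quotient.mk Q _ = Ideal.Quotient.mk Q _
        rw [eq_comm, Ideal.Quotient.eq]
        exact Ideal.subset_span ⟨j, rfl⟩
      have h2 := DFunLike.congr_fun h1 f
      rw [AlgHom.comp_apply, (hf : ψ f = 0), map_zero] at h2
      exact Ideal.Quotient.eq_zero_iff_mem.mp h2.symm
    · rw [Ideal.span_le]
      rintro _ ⟨j, rfl⟩
      change ψ _ = 0
      rw [map_sub, hψX, sub_eq_zero, map_sum]
      refine Finset.sum_congr rfl fun i hi => ?_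
      rw [map_mul, hψI i hi, ← algebraMap_eq, AlgHom.commutes]
  have hΛPC : Λ ≤ PC := by
    rw [hΛgen, Ideal.span_le]
    rintro _ ⟨j, rfl⟩
    exact ha' j
  -- dimension
  have hdim : ringKrullDim (MvPolynomial (Fin (r+1)) Ω ⧸ Λ) ≤ (I.card : WithBot ℕ∞) := by
    let π : MvPolynomial I Ω →ₐ[Ω] MvPolynomial (Fin (r+1)) Ω ⧸ Λ :=
      (Ideal.Quotient.mkₐ Ω Λ).comp (rename Subtype.val)
    have hπ : Function.Surjective π := by
      rw [← AlgHom.range_eq_top, eq_top_iff]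
      rintro x -
      obtain ⟨f, rfl⟩ := Ideal.Quotient.mk_surjective x
      induction f using MvPolynomial.induction_on with
      | C c => exact ⟨C c, by change π _ = _; simp only [π, AlgHom.comp_apply, rename_C]; rfl⟩
      | add p q hp hq => rw [map_add]; exact add_mem hp hq
      | mul_X p j hp =>
        rw [map_mul]
        refine mul_mem hp ?_
        refine ⟨∑ i : I, C (a j i) * X i, ?_⟩
        change π _ = _
        simp only [π, AlgHom.comp_apply, map_sum, map_mul, rename_X, rename_C]
        have h1 : Ideal.Quotient.mk Λ (X j) = Ideal.Quotient.mk Λ (∑ i ∈ I, C (a j i) * X i) := by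
          rw [Ideal.Quotient.eq, hΛgen]
          exact Ideal.subset_span ⟨j, rfl⟩
        rw [h1, map_sum, ← Finset.sum_coe_sort I]
        exact Finset.sum_congr rfl fun i _ => by rw [map_mul]; rfl
    have h1 := ringKrullDim_le_of_surjective π.toRingHom hπ
    rw [MvPolynomial.ringKrullDim_of_isNoetherianRing, ringKrullDim_eq_zero_of_field] at h1
    simpa using h1
  have chainΛ : ∀ l : LTSeries (PrimeSpectrum (MvPolynomial (Fin (r+1)) Ω)), Λ ≤ l.head.asIdeal →
      l.length ≤ I.card := by
    intro l hl
    have := (dim_ge_of_chain Λ l hl).trans hdim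
    exact_mod_cast this
  have ext3 : ∀ l : LTSeries (PrimeSpectrum (MvPolynomial (Fin (r+1)) Ω)), l.last.asIdeal = PC →
      ∃ l' : LTSeries (PrimeSpectrum (MvPolynomial (Fin (r+1)) Ω)), l'.head = l.head ∧
        l'.length = l.length + 2 := by
    intro l hl
    have g1 : l.last < (⟨P1, hP1'⟩ : PrimeSpectrum (MvPolynomial (Fin (r+1)) Ω)) := by
      change l.last.asIdeal < P1
      rw [hl]; exact hlt1
    have g2 : (l.snoc _ g1).last < (⟨irr Ω r, hirr⟩ : PrimeSpectrum (MvPolynomial (Fin (r+1)) Ω)) := by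
      rw [RelSeries.last_snoc]; exact hlt2
    exact ⟨(l.snoc _ g1).snoc _ g2, by simp, by simp⟩
  have pair : ∀ P Q : PrimeSpectrum (MvPolynomial (Fin (r+1)) Ω), P.asIdeal ≤ Q.asIdeal → P.asIdeal ≠ Q.asIdeal →
      ∃ l : LTSeries (PrimeSpectrum (MvPolynomial (Fin (r+1)) Ω)), l.head = P ∧ l.last = Q ∧ l.length = 1 := by
    intro P Q h h'
    have hlt : P < Q := lt_of_le_of_ne h (fun he => h' (congrArg _ he))
    exact ⟨(RelSeries.singleton _ P).snoc Q hlt, RelSeries.head_snoc _ _ _, RelSeries.last_snoc _ _ _, rfl⟩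
  have hcard2 : 2 ≤ I.card := by
    obtain ⟨l', h1, h2⟩ := ext3 (RelSeries.singleton _ ⟨PC, hPC⟩) rfl
    have := chainΛ l' (by rw [h1]; exact hΛPC)
    rw [h2] at this
    simpa using this
  obtain ⟨b, hb⟩ : ∃ b, I.card = b + 1 := ⟨I.card - 1, by omega⟩
  have hbr : b ≤ r := by
    have := Finset.card_le_univ I
    simp at this
    omega
  by_cases hb1 : b = 1
  · left
    have hPΛ : PC = Λ := by
      by_contra hne
      obtain ⟨l, g1, g2, g3⟩ := pair ⟨Λ, hΛp⟩ ⟨PC, hPC⟩ hΛPC (fun h => hne h.symm)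
      obtain ⟨l', h1, h2⟩ := ext3 l (by rw [g2])
      have := chainΛ l' (by rw [h1, g1])
      omega
    obtain ⟨i0, i1, h01, hI01⟩ := Finset.card_eq_two.mp (show I.card = 2 by omega)
    have m0 : i0 ∈ I := by rw [hI01]; simp
    have m1 : i1 ∈ I := by rw [hI01]; simp
    refine ⟨fun j => a j i0, fun j => a j i1, ?_, ?_⟩
    · rw [LinearIndependent.pair_iff]
      intro s t hst
      have q0 := congrFun hst i0
      have q1 := congrFun hst i1
      simp only [Pi.add_apply, Pi.smul_apply, Pi.zero_apply, hdelta i0 m0 i0 m0, hdelta i0 m0 i1 m1,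
        hdelta i1 m1 i0 m0, hdelta i1 m1 i1 m1, if_neg h01, if_neg h01.symm, if_true, smul_eq_mul,
        mul_one, mul_zero, add_zero, zero_add] at q0 q1
      exact ⟨q0, q1⟩
    · intro i s t
      have h1 : ψ (F i) = 0 := by
        have := hPCF i
        rw [hPΛ] at this
        exact this
      have h2 : (aeval (fun j => if j = i0 then s else t) : MvPolynomial (Fin (r+1)) Ω →ₐ[Ω] Ω).comp ψ =
          aeval (fun j => s * a j i0 + t * a j i1) := by
        ext j
        rw [AlgHom.comp_apply, hψX, hI01, Finset.sum_pair h01]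
        simp [h01.symm, mul_comm]
      have h3 := DFunLike.congr_fun h2 (F i)
      rw [AlgHom.comp_apply, h1, map_zero, aeval_eq_eval] at h3
      exact h3.symm
  · right
    let B0 : Finset Ω := (Iᶜ ×ˢ I).image (fun x => a x.1 x.2)
    have hB0 : B0.card ≤ (r - b) * (b + 1) := by
      refine Finset.card_image_le.trans ?_
      rw [Finset.card_product, Finset.card_compl, hb]
      simp
    have haB : ∀ j, ∀ i ∈ I, a j i ∈ kB K (B0 : Set Ω) := by
      intro j i hi
      by_cases hj : j ∈ I
      · rw [hdelta j hj i hi]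
        split_ifs
        · exact one_mem _
        · exact zero_mem _
      · apply subset_kB
        simp only [B0, Finset.coe_image]
        exact ⟨(j, i), by simp [hj, hi], rfl⟩
    have hdefΛ : DefOver K (B0 : Set Ω) Λ := by
      rw [hΛgen]
      refine defOver_span ?_
      rintro _ ⟨j, rfl⟩ m
      simp only [coeff_sub, coeff_sum, coeff_C_mul, coeff_X]
      refine sub_mem ?_ (sum_mem fun i hi => mul_mem (haB j i hi) ?_)
      · split_ifs
        · exact one_mem _
        · exact zero_mem _
      · split_ifs
        · exact one_mem _
        · exact zero_mem _
    let S : Finset (Fin (n+1)) := Finset.univ.erase (Fin.last n)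
    obtain ⟨B, P, T, l, h1, h2, h3, h4, h5, h6, h7, h8, h9⟩ :=
      ind (K := K) F hF PC hPCF I b hb hI Λ hΛPC B0 hdefΛ S
    have hPP : P.asIdeal = PC := by
      by_contra hne
      obtain ⟨l, g1, g2, g3⟩ := pair P ⟨PC, hPC⟩ h1 hne
      obtain ⟨l', k1, k2⟩ := ext3 l (by rw [g2])
      have k3 := dim_le_of_PH (K := K) 2 (fun i : Fin n => F i.castSucc) (fun i => d i.castSucc)
        (fun i => hF _) hP2
      have k4 := dim_ge_of_chain (Ideal.span (Set.range (fun i : Fin n => F i.castSucc))) l' (by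
        rw [k1, g1, Ideal.span_le]
        rintro _ ⟨i, rfl⟩
        exact h3 _ (by simp [S]))
      have k5 := k4.trans k3
      rw [k2, g3] at k5
      norm_cast at k5
    have hTb : T.card + 2 ≤ b + 1 := by
      obtain ⟨l', k1, k2⟩ := ext3 l (by rw [h7, hPP])
      have := chainΛ l' (by rw [k1]; exact h6)
      omega
    obtain ⟨t, c, g, ht, hFs⟩ := descend_form P.asIdeal (defOver_iff.mp h2) I b hb
        (fun c hc => hI c (h1 hc)) (d (Fin.last n)) (F (Fin.last n)) (by rw [hPP]; exact hPCF _) (hF _)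
    let B' := B ∪ Finset.univ.image c
    have hBB : (B : Set Ω) ⊆ B' := by
      intro x hx; simp only [B', Finset.coe_union]; exact Or.inl hx
    have hlT : Fin.last n ∉ T := fun h => by simpa [S] using h5 h
    refine ⟨B', ?_, ?_⟩
    · intro i
      by_cases hi : i = Fin.last n
      · subst hi
        intro m
        rw [hFs, coeff_sum]
        refine sum_mem fun i _ => ?_
        rw [coeff_C_mul, coeff_map]
        refine mul_mem (subset_kB _ ?_) (kB_mono hBB (coeff m (g i)).2)
        simp [B']
      · exact (h4 i (by simp [S, hi])).mono hBB
    · have hB' : B'.card ≤ B.card + t := by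
        refine (Finset.card_union_le _ _).trans ?_
        have := Finset.card_image_le (s := Finset.univ) (f := c)
        simp at this
        omega
      have k1 := arith (r := r) (b := b) d T hd hD hlT hTb (by omega) hbr hn
      have k2 : ∑ j, Fintype.card (Mon r (d j)) = Fintype.card (Mon r (d (Fin.last n))) +
          ∑ j ∈ S, Fintype.card (Mon r (d j)) :=
        (Finset.add_sum_erase _ _ (Finset.mem_univ _)).symm
      have k3 : ∑ j ∈ Finset.univ \ T, (b * d j + 1) = (b * d (Fin.last n) + 1) + ∑ j ∈ S \ T, (b * d j + 1) := by
        have hST : S \ T = (Finset.univ \ T).erase (Fin.last n) := by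
          ext x; simp [S, and_comm]
        rw [hST]
        exact (Finset.add_sum_erase _ (fun j => b * d j + 1) (by simpa using hlT)).symm
      rw [mul_comm (r - b)] at hB0
      omega

end
end TL

namespace TL
noncomputable section
open MvPolynomial TopologicalSpace

theorem gen_pt_aux.{u} {K R : Type u} [Field K] [CommRing R] [IsDomain R] [Algebra K R] :
    ∃ (Ω : Type u) (_ : Field Ω) (_ : Algebra K Ω) (_ : IsAlgClosed Ω) (f : R →ₐ[K] Ω),
      Function.Injective f := by
  let κ := FractionRing R
  let Ω := AlgebraicClosure κ
  let f : R →+* Ω := (algebraMap κ Ω).comp (algebraMap R κ)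
  let _ : Algebra K Ω := (f.comp (algebraMap K R)).toAlgebra
  refine ⟨Ω, inferInstance, inferInstance, inferInstance, ⟨f, fun _ => rfl⟩, ?_⟩
  exact (algebraMap κ Ω).injective.comp (IsFractionRing.injective R κ)

theorem gen_pt.{u} {K : Type u} [Field K] {ι : Type} [Finite ι] (I : Ideal (MvPolynomial ι K)) [hI : I.IsPrime] :
    ∃ (Ω : Type u) (_ : Field Ω) (_ : Algebra K Ω) (_ : IsAlgClosed Ω) (y : ι → Ω),
      (∀ p, aeval y p = 0 ↔ p ∈ I) ∧ ∀ (B : Set Ω) (N : ℕ), B.encard ≤ N → (∀ j, y j ∈ kB K B) →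
        ringKrullDim (MvPolynomial ι K ⧸ I) ≤ N := by
  obtain ⟨Ω, h1, h2, h3, f, hf⟩ := gen_pt_aux (K := K) (R := MvPolynomial ι K ⧸ I)
  have key : ∀ p, f (Ideal.Quotient.mk I p) = aeval (fun j => f (Ideal.Quotient.mk I (X j))) p := by
    intro p
    have : f.comp (Ideal.Quotient.mkₐ K I) = aeval (fun j => f (Ideal.Quotient.mk I (X j))) := by
      ext j; simp
    exact DFunLike.congr_fun this p
  refine ⟨Ω, h1, h2, h3, fun j => f (Ideal.Quotient.mk I (X j)), fun p => ?_, fun B N hB hy => ?_⟩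
  · rw [← key, map_eq_zero_iff f hf, Ideal.Quotient.eq_zero_iff_mem]
  · refine dim_le_card f hf B (fun x => ?_) N hB
    obtain ⟨p, rfl⟩ := Ideal.Quotient.mk_surjective x
    rw [key]
    have : aeval (fun j => f (Ideal.Quotient.mk I (X j))) p =
        ((aeval (fun j => (⟨_, hy j⟩ : kB K B)) p : kB K B) : Ω) := by
      have h4 := comp_aeval (fun j => (⟨_, hy j⟩ : kB K B)) (kB K B).val
      exact (DFunLike.congr_fun h4 p).symm
    rw [this]
    exact Subtype.mem _

theorem full_of_no_zero {E J σ : Type*} [Field E] [IsAlgClosed E] [Finite σ]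
    (F : J → MvPolynomial σ E)
    (hno : ∀ ξ : σ → E, ξ ≠ 0 → ∃ j, eval ξ (F j) ≠ 0) : ∃ N, Full F N := by
  have := Fintype.ofFinite σ
  set I := Ideal.span (Set.range F)
  let M : Ideal (MvPolynomial σ E) := Ideal.span (Set.range X)
  have hle : M ≤ I.radical := by
    refine Ideal.span_le.mpr ?_
    rintro _ ⟨i, rfl⟩
    rw [← MvPolynomial.vanishingIdeal_zeroLocus_eq_radical (K := E)]
    refine mem_vanishingIdeal_iff.mpr ?_
    intro z hz
    by_cases hz0 : z = 0
    · simp [hz0]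
    · obtain ⟨j, hj⟩ := hno z hz0
      exact absurd (by simpa [aeval_eq_eval] using hz (F j) (Ideal.subset_span ⟨j, rfl⟩)) hj
  obtain ⟨N, hN⟩ := Ideal.exists_pow_le_of_le_radical_of_fg hle
    (IsNoetherian.noetherian _)
  refine ⟨N, fun m hm => hN ?_⟩
  have : monomial m (1 : E) = ∏ i, X i ^ m i := by
    rw [monomial_eq, Finsupp.prod_fintype _ _ (by simp)]; simp
  rw [this]
  have hd : m.degree = ∑ i, m i := Finsupp.degree_eq_sum m
  rw [← hm, hd, ← Finset.prod_pow_eq_pow_sum]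
  exact Ideal.prod_mem_prod (I := fun i => M ^ m i) fun i _ => Ideal.pow_mem_pow (Ideal.subset_span (Set.mem_range_self i)) _

theorem no_zero_of_full {E J σ : Type*} [Field E]
    (F : J → MvPolynomial σ E) (N : ℕ) (hN : Full F N) (ξ : σ → E) (hξ : ξ ≠ 0)
    (h : ∀ j, eval ξ (F j) = 0) : False := by
  obtain ⟨i, hi⟩ := Function.ne_iff.mp hξ
  have h1 := hN (Finsupp.single i N) (by simp)
  have h2 : Ideal.span (Set.range F) ≤ RingHom.ker (eval ξ) := by
    refine Ideal.span_le.mpr ?_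
    rintro _ ⟨j, rfl⟩
    exact h j
  have h3 : eval ξ (monomial (Finsupp.single i N) (1:E)) = 0 := h2 h1
  rw [eval_monomial] at h3
  simp at h3
  exact hi h3.1

end
end TL

namespace TL
noncomputable section
open MvPolynomial TopologicalSpace

/-- linear form -/
def lin {E : Type*} [CommRing E] {r : ℕ} (c : Fin (r+1) → E) : MvPolynomial (Fin (r+1)) E :=
  ∑ i, C (c i) * X i

theorem lin_hom {E : Type*} [CommRing E] {r : ℕ} (c : Fin (r+1) → E) : (lin c).IsHomogeneous 1 := by
  refine IsHomogeneous.sum _ _ _ fun i _ => ?_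
  have := (isHomogeneous_C (Fin (r+1)) (c i)).mul (isHomogeneous_X E i)
  simpa using this

theorem map_lin {E E' : Type*} [CommRing E] [CommRing E'] (f : E →+* E') {r : ℕ} (c : Fin (r+1) → E) :
    map f (lin c) = lin (fun j => f (c j)) := by
  simp [lin, map_sum]

theorem eval_lin {E : Type*} [CommRing E] {r : ℕ} (c x : Fin (r+1) → E) :
    eval x (lin c) = ∑ i, c i * x i := by
  simp [lin, map_sum]

/-- forms vanish on a common line -/
def OnLine {E J : Type*} [Field E] {r : ℕ} (F : J → MvPolynomial (Fin (r+1)) E) : Prop :=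
  ∃ v w : Fin (r+1) → E, LinearIndependent E ![v, w] ∧ ∀ i, ∀ s t : E,
    eval (fun j => s * v j + t * w j) (F i) = 0

theorem line_ideal {E : Type*} [Field E] [Infinite E] {r : ℕ} (v w : Fin (r+1) → E)
    (h : LinearIndependent E ![v, w]) : ∃ l : Fin (r-1) → Fin (r+1) → E,
    ∀ F : MvPolynomial (Fin (r+1)) E, (∀ s t : E, eval (fun j => s * v j + t * w j) F = 0) →
      F ∈ Ideal.span (Set.range fun k => lin (l k)) := by
  classical
  let W : Submodule E (Fin (r+1) → E) := Submodule.span E (Set.range ![v, w])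
  have hW : Module.finrank E W = 2 := by
    have := finrank_span_eq_card h
    simpa using this
  have hA : Module.finrank E W.dualAnnihilator = r - 1 := by
    have h1 := Subspace.finrank_add_finrank_dualAnnihilator_eq W
    have h2 : Module.finrank E (Fin (r+1) → E) = r + 1 := by simp
    omega
  have : Module.Free E W.dualAnnihilator := Module.Free.of_divisionRing E W.dualAnnihilator
  let b := Module.finBasisOfFinrankEq E W.dualAnnihilator hA
  obtain ⟨g, hg⟩ := W.subtype.exists_leftInverse_of_injective W.ker_subtype
  let ψ : Fin (r+1) → Module.Dual E (Fin (r+1) → E) := fun j =>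
    (LinearMap.proj j : (Fin (r+1) → E) →ₗ[E] E) - (LinearMap.proj j : (Fin (r+1) → E) →ₗ[E] E) ∘ₗ W.subtype ∘ₗ g
  have hψ : ∀ j, ψ j ∈ W.dualAnnihilator := by
    intro j
    rw [Submodule.mem_dualAnnihilator]
    intro x hx
    have := DFunLike.congr_fun hg ⟨x, hx⟩
    simp only [LinearMap.comp_apply, Submodule.subtype_apply, LinearMap.id_apply] at this
    simp [ψ, this]
  refine ⟨fun k j => (b k).1 (Pi.single j 1), fun F hF => ?_⟩
  set I := Ideal.span (Set.range fun k => lin (fun j => (b k).1 (Pi.single j 1)))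
  let Y : Fin (r+1) → MvPolynomial (Fin (r+1)) E := fun j => lin (fun l => (g (Pi.single l 1)).1 j)
  have hXY : ∀ j, X j - Y j ∈ I := by
    intro j
    have h1 : X j - Y j = ∑ k, C (b.repr ⟨ψ j, hψ j⟩ k) * lin (fun j => (b k).1 (Pi.single j 1)) := by
      have h2 : X j - Y j = lin (fun l => ψ j (Pi.single l 1)) := by
        have : X j = lin (fun l => (Pi.single l (1:E) : Fin (r+1) → E) j) := by
          simp [lin, Pi.single_apply, Finset.sum_ite_eq]
        rw [this]
        simp only [Y, lin, ψ]
        rw [← Finset.sum_sub_distrib]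
        refine Finset.sum_congr rfl fun l _ => ?_
        simp [sub_mul]
      rw [h2]
      have h3 := congrArg Subtype.val (b.sum_repr ⟨ψ j, hψ j⟩)
      have h4 : ∀ x, ψ j x = ∑ k, b.repr ⟨ψ j, hψ j⟩ k * (b k).1 x := by
        intro x
        have h5 := DFunLike.congr_fun h3 x
        rw [← show _ = ψ j x from h5, Submodule.coe_sum, LinearMap.sum_apply]
        rfl
      simp only [lin, h4, Finset.mul_sum, map_sum, Finset.sum_mul]
      rw [Finset.sum_comm]
      refine Finset.sum_congr rfl fun l _ => Finset.sum_congr rfl fun k _ => ?_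
      rw [C_mul]; ring
    rw [h1]
    exact Ideal.sum_mem _ fun k _ => Ideal.mul_mem_left _ _ (Ideal.subset_span ⟨k, rfl⟩)
  have hY0 : aeval Y F = 0 := by
    apply MvPolynomial.funext
    intro x
    have h1 : eval x (aeval Y F) = eval (fun j => eval x (Y j)) F := by
      rw [← aeval_eq_eval, ← aeval_eq_eval]
      exact DFunLike.congr_fun (comp_aeval Y (aeval x)) F
    have h2 : (fun j => eval x (Y j)) = (g x).1 := by
      have hx : x = ∑ l, x l • (Pi.single l (1:E) : Fin (r+1) → E) := by
        ext j; simp [Finset.sum_apply, Pi.single_apply]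
      funext j
      conv_rhs => rw [hx]
      simp only [Y, eval_lin, map_sum, map_smul]
      simp [Finset.sum_apply, mul_comm]
    rw [h1, h2, map_zero]
    have h3 : (g x).1 ∈ Submodule.span E (Set.range ![v, w]) := (g x).2
    simp only [Matrix.range_cons, Matrix.range_empty, Set.union_empty, Set.singleton_union] at h3
    obtain ⟨s, t, hst⟩ := Submodule.mem_span_pair.mp h3
    rw [← hst]
    exact hF s t
  have key : (Ideal.Quotient.mkₐ E I).comp (aeval Y) = Ideal.Quotient.mkₐ E I := by
    ext j
    simp only [AlgHom.comp_apply, aeval_X, Ideal.Quotient.mkₐ_eq_mk]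
    exact (Ideal.Quotient.eq.mpr (hXY j)).symm
  have h5 := DFunLike.congr_fun key F
  simp only [AlgHom.comp_apply, hY0, map_zero] at h5
  exact Ideal.Quotient.eq_zero_iff_mem.mp h5.symm

/-- parameters -/
abbrev Pm (r : ℕ) {n : ℕ} (d : Fin n → ℕ) : Type :=
  (Fin (r-1) × Fin (r+1)) ⊕ (Σ i : Fin n, Idx r (fun _ : Fin (r-1) => d i - 1))

/-- parametrized forms -/
def Lform {E : Type*} [CommRing E] {r n : ℕ} {d : Fin n → ℕ} (t : Pm r d → E) (i : Fin n) :
    MvPolynomial (Fin (r+1)) E :=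
  ∑ k, lin (fun j => t (Sum.inl (k, j))) *
    form (d := fun _ : Fin (r-1) => d i - 1) (fun m => t (Sum.inr ⟨i, m⟩)) k

/-- coefficients of parametrized forms -/
def yL {E : Type*} [CommRing E] {r n : ℕ} {d : Fin n → ℕ} (t : Pm r d → E) : Idx r d → E :=
  fun j => coeff j.2.1 (Lform t j.1)

theorem form_yL {E : Type*} [CommRing E] {r n : ℕ} {d : Fin n → ℕ} (hd : ∀ i, 1 ≤ d i)
    (t : Pm r d → E) (i : Fin n) : form (yL t) i = Lform t i := by
  refine form_unique _ _ _ ?_ fun _ => rfl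
  refine IsHomogeneous.sum _ _ _ fun k _ => ?_
  have := (lin_hom (fun j => t (Sum.inl (k, j)))).mul
    (form_hom (d := fun _ : Fin (r-1) => d i - 1) (fun m => t (Sum.inr ⟨i, m⟩)) k)
  have h2 : 1 + (d i - 1) = d i := by have := hd i; omega
  rwa [h2] at this

theorem map_yL {E E' : Type*} [CommRing E] [CommRing E'] (f : E →+* E') {r n : ℕ} {d : Fin n → ℕ}
    (t : Pm r d → E) (j) : f (yL t j) = yL (fun s => f (t s)) j := by
  simp only [yL, ← coeff_map]
  congr 1
  simp only [Lform, map_sum, map_mul, map_lin, map_form]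

theorem exists_param {E : Type*} [Field E] [Infinite E] {r n : ℕ} {d : Fin n → ℕ}
    (y : Idx r d → E) (h : OnLine (fun i => form y i)) : ∃ t, y = yL t := by
  classical
  obtain ⟨v, w, hvw, h⟩ := h
  obtain ⟨l, hl⟩ := line_ideal v w hvw
  have h1 : ∀ i, ∃ H : Idx r (fun _ : Fin (r-1) => d i - 1) → E, form y i =
      ∑ k, lin (l k) * form H k := by
    intro i
    have h2 := hom_span (fun k => lin (l k)) (fun _ => 1) (fun k => lin_hom _) (d i) _ (form_hom y i)
      (hl _ (h i))
    refine Submodule.span_induction (p := fun f _ => ∃ H : Idx r (fun _ : Fin (r-1) => d i - 1) → E, f =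
      ∑ k, lin (l k) * form H k) ?_ ?_ ?_ ?_ h2
    · rintro _ ⟨α, k, hα, rfl⟩
      have hα' : α.degree = d i - 1 := by omega
      refine ⟨Pi.single ⟨k, α, hα'⟩ 1, ?_⟩
      rw [Finset.sum_eq_single k]
      · rw [mul_comm]
        congr 1
        symm
        apply form_unique
        · exact isHomogeneous_monomial _ hα'
        · intro m
          rw [coeff_monomial, Pi.single_apply]
          refine if_congr ?_ rfl rfl
          constructor
          · rintro h; congr 1; exact Subtype.ext h.symm
          · intro h
            have := eq_of_heq (Sigma.mk.inj h).2
            rw [this]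
      · intro k' _ hk'
        have : form (Pi.single (⟨k, α, hα'⟩ : Idx r (fun _ : Fin (r-1) => d i - 1)) (1:E)) k' = 0 := by
          apply form_unique
          · exact isHomogeneous_zero _ _ _
          · intro m
            rw [coeff_zero, Pi.single_apply, if_neg]
            exact fun h => hk' (Sigma.mk.inj h).1
        rw [this, mul_zero]
      · simp
    · exact ⟨0, by simp [form]⟩
    · rintro _ _ _ _ ⟨H, rfl⟩ ⟨H', rfl⟩
      refine ⟨H + H', ?_⟩
      simp [form, Finset.sum_add_distrib, mul_add]
    · rintro a _ _ ⟨H, rfl⟩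
      refine ⟨a • H, ?_⟩
      rw [Finset.smul_sum]
      refine Finset.sum_congr rfl fun k _ => ?_
      have : form (a • H) k = a • form H k := by
        simp [form, Finset.smul_sum, smul_monomial]
      rw [this, mul_smul_comm]
  choose H hH using h1
  refine ⟨Sum.elim (fun p => l p.1 p.2) (fun p => H p.1 p.2), ?_⟩
  funext j
  rw [yL, ← coeff_form y j.1 j.2, hH]
  rfl

theorem param_onLine {E : Type*} [Field E] {r n : ℕ} {d : Fin n → ℕ} (hd : ∀ i, 1 ≤ d i)
    (hr : 1 ≤ r) (t : Pm r d → E) : OnLine (fun i => form (yL t) i) := by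
  classical
  let φ : (Fin (r+1) → E) →ₗ[E] (Fin (r-1) → E) :=
    Matrix.mulVecLin (fun k j => t (Sum.inl (k, j)))
  have h1 : 2 ≤ Module.finrank E (LinearMap.ker φ) := by
    have h2 := LinearMap.finrank_range_add_finrank_ker φ
    have h3 := Submodule.finrank_le (LinearMap.range φ)
    simp at h2 h3
    omega
  obtain ⟨f, hf⟩ := exists_linearIndependent_of_le_finrank h1
  have hf2 := hf.map' (LinearMap.ker φ).subtype (Submodule.ker_subtype _)
  refine ⟨(f 0).1, (f 1).1, ?_, fun i s t' => ?_⟩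
  · have : ![(f 0).1, (f 1).1] = ⇑(LinearMap.ker φ).subtype ∘ f := by
      funext i
      fin_cases i <;> rfl
    rw [this]
    exact hf2
  · change eval _ (form (yL t) i) = 0
    rw [form_yL hd, Lform, map_sum]
    refine Finset.sum_eq_zero fun k _ => ?_
    rw [map_mul, eval_lin]
    have h3 : φ (s • (f 0).1 + t' • (f 1).1) = 0 := (s • f 0 + t' • f 1).2
    have h4 := congrFun h3 k
    have h5 : ∑ j, t (Sum.inl (k, j)) * (s * (f 0).1 j + t' * (f 1).1 j) = 0 := h4
    rw [h5, zero_mul]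

end
end TL

namespace TL
noncomputable section
open MvPolynomial TopologicalSpace

/-- the line locus -/
def LL (K : Type*) [Field K] (r n : ℕ) (d : Fin n → ℕ) : Set (tupleSpace K r n d) :=
  {F | vanishOnCommonLine K F}

theorem mem_LL {K : Type*} [Field K] {r n : ℕ} {d : Fin n → ℕ} (F : tupleSpace K r n d) :
    F ∈ LL K r n d ↔ OnLine (fun i => form (crd K r n d F) i) := by
  simp only [form_crd]
  rfl

/-- alternating system -/
def Gsys (K : Type*) [Field K] (r : ℕ) {R : Type*} [CommRing R] [Algebra K R] {n : ℕ} {d : Fin n → ℕ}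
    (y : Idx r d → R) : ((Fin n × (Fin (r+1) → K)) ⊕ ((Fin (r+1) × Fin (r+1)) ⊕ Fin (r+1))) →
      MvPolynomial (Fin (r+1) × Fin (r+1)) R :=
  Sum.elim (fun a => bind₁ (fun j => ∑ l, C (algebraMap K R (a.2 l)) * X (j, l)) (form y a.1))
    (Sum.elim (fun a => X (a.1, a.2) + X (a.2, a.1)) (fun j => X (j, j)))

theorem Gsys_hom (K : Type*) [Field K] (r : ℕ) {R : Type*} [CommRing R] [Algebra K R] {n : ℕ} {d : Fin n → ℕ}
    (y : Idx r d → R) (s) : (Gsys K r y s).IsHomogeneous (Sum.elim (fun a => d a.1) (fun _ => 1) s) := by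
  rcases s with a | a | j
  · have := (form_hom y a.1).aeval (S := R) (n := 1)
      (fun j => ∑ l, C (algebraMap K R (a.2 l)) * X (j, l)) (fun j => by
        refine IsHomogeneous.sum _ _ _ fun i _ => ?_
        have := (isHomogeneous_C (Fin (r+1) × Fin (r+1)) (algebraMap K R (a.2 i))).mul (isHomogeneous_X R (j, i))
        simpa using this)
    simpa [Gsys] using this
  · exact (isHomogeneous_X _ _).add (isHomogeneous_X _ _)
  · exact isHomogeneous_X _ _

theorem Gsys_map (K : Type*) [Field K] (r : ℕ) {R S : Type*} [CommRing R] [Algebra K R] [CommRing S]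
    [Algebra K S] {n : ℕ} {d : Fin n → ℕ} (f : R →ₐ[K] S)
    (y : Idx r d → R) (s) : map f.toRingHom (Gsys K r y s) = Gsys K r (fun j => f (y j)) s := by
  rcases s with a | a | j
  · simp [Gsys, map_bind₁, map_form, map_sum]
  · simp [Gsys]
  · simp [Gsys]

theorem eval_Gsys {K : Type*} [Field K] {r : ℕ} {n : ℕ} {d : Fin n → ℕ}
    (y : Idx r d → K) (a) (p : Fin (r+1) × Fin (r+1) → K) :
    eval p (Gsys K r y (Sum.inl a)) = eval (fun j => ∑ l, a.2 l * p (j, l)) (form y a.1) := by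
  simp only [Gsys, Sum.elim_inl]
  rw [← aeval_eq_eval, aeval_bind₁, ← aeval_eq_eval]
  simp [map_sum]

theorem onLine_of_Gsys {K : Type*} [Field K] {r : ℕ} {n : ℕ} {d : Fin n → ℕ}
    (y : Idx r d → K) (p : Fin (r+1) × Fin (r+1) → K) (hp : p ≠ 0) (h : ∀ s, eval p (Gsys K r y s) = 0) :
    OnLine (fun i => form y i) := by
  classical
  obtain ⟨⟨j, l⟩, hjl⟩ := Function.ne_iff.mp hp
  have h1 : ∀ a b, p (a, b) + p (b, a) = 0 := fun a b => by
    simpa [Gsys] using h (Sum.inr (Sum.inl (a, b)))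
  have h2 : ∀ a, p (a, a) = 0 := fun a => by
    simpa [Gsys] using h (Sum.inr (Sum.inr a))
  refine ⟨fun a => p (a, l), fun a => p (a, j), ?_, fun i s t => ?_⟩
  · rw [LinearIndependent.pair_iff]
    intro s t hst
    have e1 := congrFun hst j
    have e2 := congrFun hst l
    simp only [Pi.add_apply, Pi.smul_apply, smul_eq_mul, Pi.zero_apply, h2, mul_zero, add_zero, zero_add] at e1 e2
    have h3 : p (l, j) = - p (j, l) := by linear_combination h1 j l
    simp only [Pi.zero_apply] at hjl
    rw [h3] at e2
    constructor
    · simpa [hjl] using e1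
    · simpa [hjl] using e2
  · have := h (Sum.inl (i, fun a => s * (Pi.single l (1:K) : Fin (r+1) → K) a + t * (Pi.single j (1:K) : Fin (r+1) → K) a))
    rw [eval_Gsys] at this
    simpa [add_mul, Finset.sum_add_distrib, Pi.single_apply] using this

theorem Gsys_of_onLine {K : Type*} [Field K] {r : ℕ} {n : ℕ} {d : Fin n → ℕ}
    (y : Idx r d → K) (h : OnLine (fun i => form y i)) :
    ∃ p : Fin (r+1) × Fin (r+1) → K, p ≠ 0 ∧ ∀ s, eval p (Gsys K r y s) = 0 := by
  classical
  obtain ⟨v, w, hvw, h⟩ := h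
  rw [LinearIndependent.pair_iff] at hvw
  refine ⟨fun a => v a.1 * w a.2 - w a.1 * v a.2, fun h0 => ?_, ?_⟩
  · have hw : w = 0 := by
      funext l
      refine (hvw (w l) (- v l) ?_).1
      funext j
      have := congrFun h0 (j, l)
      simp only [Pi.zero_apply] at this
      simp only [Pi.add_apply, Pi.smul_apply, smul_eq_mul, Pi.zero_apply]
      linear_combination this
    have := (hvw 0 1 (by simp [hw])).2
    exact one_ne_zero this
  · rintro (a | a | j)
    · rw [eval_Gsys]
      have := h a.1 (∑ l, a.2 l * w l) (- ∑ l, a.2 l * v l)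
      convert this using 3
      funext j
      rw [neg_mul, Finset.sum_mul, Finset.sum_mul, ← sub_eq_add_neg, ← Finset.sum_sub_distrib]
      refine Finset.sum_congr rfl fun l _ => ?_
      ring
    · simp [Gsys]; ring
    · simp [Gsys]; ring

theorem LL_closed {K : Type*} [Field K] [IsAlgClosed K] {r n : ℕ} {d : Fin n → ℕ} :
    IsClosed (LL K r n d) := by
  refine (isCoord K r n d _).mpr ⟨{q | ∀ F ∈ LL K r n d, eval (crd K r n d F) q = 0}, ?_⟩
  ext F
  constructor
  · intro hF q hq
    exact hq F hF
  · intro hF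
    by_contra hc
    rw [mem_LL] at hc
    obtain ⟨N, hN⟩ := full_of_no_zero (Gsys K r (crd K r n d F)) (fun p hp => by
      by_contra! h
      exact hc (onLine_of_Gsys _ p hp h))
    have hm : ∀ y : Idx r d → K, (fun s => map (aeval y : MvPolynomial (Idx r d) K →ₐ[K] K).toRingHom
        (Gsys K r (fun j => (X j : MvPolynomial (Idx r d) K)) s)) = Gsys K r y := by
      intro y
      funext s
      rw [Gsys_map]; simp
    obtain ⟨q, hq, hq'⟩ := elim (k := K) (Gsys K r (fun j => (X j : MvPolynomial (Idx r d) K))) _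
      (Gsys_hom K r _) N (crd K r n d F) (by rw [hm]; exact hN)
    apply hq
    rw [aeval_eq_eval]
    apply hF
    intro F' hF'
    by_contra hc'
    have h1 := hq' K (crd K r n d F') (by rw [aeval_eq_eval]; exact hc')
    rw [hm] at h1
    rw [mem_LL] at hF'
    obtain ⟨p, hp, hp'⟩ := Gsys_of_onLine _ hF'
    exact no_zero_of_full _ N h1 p hp hp'

/-- `Iof L` is a kernel -/
theorem mem_Iof_LL {K : Type*} [Field K] [Infinite K] {r n : ℕ} {d : Fin n → ℕ} (hd : ∀ i, 1 ≤ d i)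
    (hr : 1 ≤ r) (p : MvPolynomial (Idx r d) K) : p ∈ Iof (K := K) (crd K r n d).toEquiv (LL K r n d) ↔
      aeval (yL (fun s : Pm r d => (X s : MvPolynomial (Pm r d) K))) p = 0 := by
  have key : ∀ t : Pm r d → K, eval t (aeval (yL (fun s : Pm r d => (X s : MvPolynomial (Pm r d) K))) p) =
      eval (yL t) p := by
    intro t
    rw [← aeval_eq_eval, ← aeval_eq_eval]
    have h := DFunLike.congr_fun (comp_aeval (yL (fun s : Pm r d => (X s : MvPolynomial (Pm r d) K)))
      (aeval t : MvPolynomial (Pm r d) K →ₐ[K] K)) p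
    rw [AlgHom.comp_apply] at h
    rw [h]
    congr 2
    funext j
    have := map_yL (aeval t : MvPolynomial (Pm r d) K →ₐ[K] K).toRingHom (fun s : Pm r d => (X s : MvPolynomial (Pm r d) K)) j
    simpa using this
  constructor
  · intro hp
    apply MvPolynomial.funext
    intro t
    rw [key, map_zero]
    have := hp ((crd K r n d).symm (yL t)) (by
      rw [mem_LL]; simp only [LinearEquiv.apply_symm_apply]; exact param_onLine hd hr t)
    simpa using this
  · intro hp F hF
    rw [mem_LL] at hF
    obtain ⟨t, ht⟩ := exists_param _ hF
    change eval (crd K r n d F) p = 0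
    rw [ht, ← key, hp, map_zero]

theorem transfer {K E : Type*} [Field K] [Infinite K] [Field E] [Algebra K E] {r n : ℕ} {d : Fin n → ℕ}
    (hd : ∀ i, 1 ≤ d i)
    (hr : 1 ≤ r) (p : MvPolynomial (Idx r d) K) (hp : p ∈ Iof (K := K) (crd K r n d).toEquiv (LL K r n d))
    (y : Idx r d → E) (hy : OnLine (fun i => form y i)) : aeval y p = 0 := by
  have : Infinite E := Infinite.of_injective _ (algebraMap K E).injective
  obtain ⟨t, rfl⟩ := exists_param _ hy
  rw [mem_Iof_LL hd hr] at hp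
  have h := DFunLike.congr_fun (comp_aeval (yL (fun s : Pm r d => (X s : MvPolynomial (Pm r d) K)))
      (aeval t : MvPolynomial (Pm r d) K →ₐ[K] E)) p
  rw [AlgHom.comp_apply, hp, map_zero] at h
  rw [h]
  congr 2
  funext j
  have := map_yL (aeval t : MvPolynomial (Pm r d) K →ₐ[K] E).toRingHom (fun s : Pm r d => (X s : MvPolynomial (Pm r d) K)) j
  simpa using this.symm

theorem LL_prime {K : Type*} [Field K] [Infinite K] {r n : ℕ} {d : Fin n → ℕ} (hd : ∀ i, 1 ≤ d i)
    (hr : 1 ≤ r) : (Iof (K := K) (crd K r n d).toEquiv (LL K r n d)).IsPrime := by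
  have : Iof (K := K) (crd K r n d).toEquiv (LL K r n d) =
      RingHom.ker (aeval (yL (fun s : Pm r d => (X s : MvPolynomial (Pm r d) K))) :
        MvPolynomial (Idx r d) K →ₐ[K] _) := by
    ext p
    rw [mem_Iof_LL hd hr]; rfl
  rw [this]
  exact RingHom.ker_isPrime _

theorem LL_irred {K : Type*} [Field K] [IsAlgClosed K] {r n : ℕ} {d : Fin n → ℕ} (hd : ∀ i, 1 ≤ d i)
    (hr : 1 ≤ r) : IsIrreducible (LL K r n d) := by
  have : Infinite K := IsAlgClosed.instInfinite
  have h1 := LL_prime (K := K) (n := n) hd hr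
  have h2 := (Vof_irred (isCoord K r n d) (Iof (K := K) (crd K r n d).toEquiv (LL K r n d))).2
  rwa [Vof_Iof (isCoord K r n d) LL_closed] at h2

end
end TL

namespace TL
noncomputable section
open MvPolynomial TopologicalSpace

/-- Z -/
def ZZ (K : Type*) [Field K] (r n : ℕ) (d : Fin (n+1) → ℕ) : Set (tupleSpace K r (n+1) d) :=
  {F | ¬ PH K 1 (fun s => form (crd K r (n+1) d F) (id s))}

/-- D -/
def DD (K : Type*) [Field K] (r n : ℕ) (d : Fin (n+1) → ℕ) : Set (tupleSpace K r (n+1) d) :=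
  {F | ¬ PH K 2 (fun s : Fin n => form (crd K r (n+1) d F) (Fin.castSucc s))}

theorem main_prop {K : Type*} [Field K] [IsAlgClosed K] {r n : ℕ} {d : Fin (n+1) → ℕ}
    (hd : ∀ i, 1 ≤ d i) (hD : ∀ i, d i ≤ d (Fin.last n)) (hr : 1 ≤ r) (hn : r ≤ n + 1)
    (T : Set (tupleSpace K r (n+1) d)) (hT : IsClosed T) (hTi : IsIrreducible T)
    (hTZ : T ⊆ ZZ K r n d) (hTD : ¬ T ⊆ DD K r n d) :
    T ⊆ LL K r (n+1) d ∨ ∃ b : ℕ, dimSet T ≤ b ∧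
      b + ∑ j, (d j + 1) + 1 ≤ ∑ j, Fintype.card (Mon r (d j)) + 2 * (r - 1) := by
  have : Infinite K := IsAlgClosed.instInfinite
  have he := isCoord K r (n+1) d
  have hP := Iof_prime he hTi
  obtain ⟨Ω, _, _, _, y, hy, hdim⟩ := gen_pt (Iof (K := K) (crd K r (n+1) d).toEquiv T)
  have hP2 : PH K 2 (fun s : Fin n => form y (Fin.castSucc s)) := by
    obtain ⟨F, hF, hFD⟩ := Set.not_subset.mp hTD
    have hF2 : PH K 2 (fun s : Fin n => form (crd K r (n+1) d F) (Fin.castSucc s)) := not_not.mp hFD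
    obtain ⟨q, hq, hq'⟩ := PH_open _ _ hF2
    refine hq' Ω y fun h0 => hq ?_
    rw [aeval_eq_eval]
    exact (hy q).mp h0 F hF
  have hP1 : ¬ PH K 1 (fun s => form y (id s)) := by
    intro h
    obtain ⟨q, hq, hq'⟩ := PH_open _ _ h
    apply hq
    rw [hy]
    intro F hF
    by_contra hc
    exact hTZ hF (hq' K (crd K r (n+1) d F) (by rw [aeval_eq_eval]; exact hc))
  rcases main_alg (K := K) (fun i => form y i) (fun i => form_hom y i) hd hD hn hP1 hP2 with h | ⟨B, hB, hc⟩
  · left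
    have h1 : Iof (K := K) (crd K r (n+1) d).toEquiv (LL K r (n+1) d) ≤ Iof (K := K) (crd K r (n+1) d).toEquiv T := by
      intro p hp
      rw [← hy]
      exact transfer hd hr p hp y h
    have h2 : T ⊆ Vof (K := K) (crd K r (n+1) d).toEquiv (Iof (K := K) (crd K r (n+1) d).toEquiv (LL K r (n+1) d)) := by
      intro F hF p hp
      exact h1 hp F hF
    rwa [Vof_Iof he LL_closed] at h2
  · right
    refine ⟨B.card, (dim_le he T hT).trans (hdim B B.card (by simp) fun j => ?_), hc⟩
    have := hB j.1 j.2.1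
    rwa [coeff_form] at this

theorem LL_sub_ZZ {K : Type*} [Field K] {r n : ℕ} {d : Fin (n+1) → ℕ} : LL K r (n+1) d ⊆ ZZ K r n d := by
  intro F hF
  rw [mem_LL] at hF
  obtain ⟨v, w, hvw, h⟩ := hF
  rintro ⟨c, N, hN⟩
  rw [LinearIndependent.pair_iff] at hvw
  have hst : ∃ s t : K, (s ≠ 0 ∨ t ≠ 0) ∧ ∑ i, c 0 i * (s * v i + t * w i) = 0 := by
    have h1 : ∀ s t : K, ∑ i, c 0 i * (s * v i + t * w i) = s * (∑ i, c 0 i * v i) + t * ∑ i, c 0 i * w i := by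
      intro s t
      rw [Finset.mul_sum, Finset.mul_sum, ← Finset.sum_add_distrib]
      exact Finset.sum_congr rfl fun i _ => by ring
    by_cases h0 : ∑ i, c 0 i * v i = 0
    · exact ⟨1, 0, Or.inl one_ne_zero, by rw [h1, h0]; simp⟩
    · exact ⟨- ∑ i, c 0 i * w i, ∑ i, c 0 i * v i, Or.inr h0, by rw [h1]; ring⟩
  obtain ⟨s, t, hst, h0⟩ := hst
  refine no_zero_of_full _ N hN (fun i => s * v i + t * w i) (fun hz => ?_) ?_
  · have := hvw s t hz
    tauto
  · rintro (i | k)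
    · exact h i s t
    · have : k = 0 := Subsingleton.elim _ _
      subst this
      simpa [linf, map_sum] using h0

theorem LL_not_DD {K : Type*} [Field K] [IsAlgClosed K] {r n : ℕ} {d : Fin (n+1) → ℕ}
    (hd : ∀ i, 1 ≤ d i) (hr : 1 ≤ r) (hn : r ≤ n + 1) : ¬ LL K r (n+1) d ⊆ DD K r n d := by
  classical
  let G : Fin (n+1) → MvPolynomial (Fin (r+1)) K := fun i =>
    if h : i.val < r - 1 then X ⟨i.val + 2, by omega⟩ ^ d i else 0
  have hG : ∀ i, G i ∈ homogeneousSubmodule (Fin (r+1)) K (d i) := by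
    intro i
    simp only [G]
    split_ifs
    · have := (isHomogeneous_X K (⟨i.val + 2, by omega⟩ : Fin (r+1))).pow (d i)
      simpa using this
    · exact Submodule.zero_mem _
  let F : tupleSpace K r (n+1) d := fun i => ⟨G i, hG i⟩
  have hF : ∀ i, form (crd K r (n+1) d F) i = G i := fun i => form_crd F i
  intro hsub
  refine hsub (a := F) ?_ ?_
  · rw [mem_LL]
    refine ⟨Pi.single ⟨0, by omega⟩ 1, Pi.single ⟨1, by omega⟩ 1, ?_, fun i s t => ?_⟩
    · rw [LinearIndependent.pair_iff]
      intro s t hst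
      have e1 := congrFun hst ⟨0, by omega⟩
      have e2 := congrFun hst ⟨1, by omega⟩
      simp [Pi.single_apply] at e1 e2
      exact ⟨e1, e2⟩
    · simp only [hF, G]
      split_ifs with h
      · have := hd i
        simp [Pi.single_apply]
        omega
      · simp
  · change PH K 2 _
    simp only [hF]
    let c : Fin 2 → Fin (r+1) → K := ![Pi.single ⟨0, by omega⟩ 1, Pi.single ⟨1, by omega⟩ 1]
    obtain ⟨N, hN⟩ := full_of_no_zero (Sum.elim (fun s : Fin n => G s.castSucc) (fun s => linf (c s))) (by
      intro ξ hξ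
      by_contra! hc
      apply hξ
      have h0 := hc (Sum.inr 0)
      have h1 := hc (Sum.inr 1)
      simp [linf, c, Pi.single_apply] at h0 h1
      funext j
      obtain ⟨j, hj⟩ := j
      match j, hj with
      | 0, hj => exact h0
      | 1, hj => exact h1
      | k+2, hj =>
        have := hc (Sum.inl ⟨k, by omega⟩)
        have hk : k < r - 1 := by omega
        simp [G, hk] at this
        exact this.1)
    exact ⟨c, N, hN⟩

end
end TL

namespace TL
noncomputable section
open MvPolynomial TopologicalSpace

theorem lemJ {K G H : Type*} [Field K] [Finite G] [Finite H] (z : G ⊕ H → MvPolynomial (G ⊕ H) K)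
    (hG : ∀ g, z (Sum.inl g) = X (Sum.inl g))
    (hH : ∀ h, z (Sum.inr h) - X (Sum.inr h) ∈ Ideal.span (Set.range fun g : G => (X (Sum.inl g) : MvPolynomial (G ⊕ H) K))) :
    AlgebraicIndependent K z := by
  set J := Ideal.span (Set.range fun g : G => (X (Sum.inl g) : MvPolynomial (G ⊕ H) K)) with hJ
  let β : MvPolynomial (G ⊕ H) K →ₐ[K] MvPolynomial (G ⊕ H) K := aeval z
  have h1 : ∀ x, β x - x ∈ J := by
    intro x
    have : (Ideal.Quotient.mkₐ K J).comp β = Ideal.Quotient.mkₐ K J := by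
      ext j
      simp only [β, AlgHom.comp_apply, aeval_X, Ideal.Quotient.mkₐ_eq_mk]
      apply Ideal.Quotient.eq.mpr
      rcases j with g | h
      · rw [hG, sub_self]; exact J.zero_mem
      · exact hH h
    exact Ideal.Quotient.eq.mp (DFunLike.congr_fun this x)
  have h2 : ∀ x ∈ J, β x - x ∈ J ^ 2 ∧ β x ∈ J := by
    intro x hx
    refine Submodule.span_induction (p := fun x _ => β x - x ∈ J ^ 2 ∧ β x ∈ J) ?_ ?_ ?_ ?_ hx
    · rintro _ ⟨g, rfl⟩
      simp only [β, aeval_X, hG, sub_self]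
      exact ⟨Ideal.zero_mem _, Ideal.subset_span ⟨g, rfl⟩⟩
    · simp
    · rintro x y _ _ ⟨a, b⟩ ⟨c, e⟩
      rw [map_add]
      refine ⟨?_, J.add_mem b e⟩
      have := Ideal.add_mem _ a c
      convert this using 1
      ring
    · rintro a x _ ⟨b, c⟩
      rw [smul_eq_mul, map_mul]
      refine ⟨?_, J.mul_mem_left _ c⟩
      have e1 : (β a - a) * β x ∈ J ^ 2 := by
        rw [pow_two]; exact Ideal.mul_mem_mul (h1 a) c
      have := Ideal.add_mem _ e1 (Ideal.mul_mem_left _ a b)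
      convert this using 1
      ring
  have h3 : ∀ s : ℕ, ∀ P ∈ J ^ s, β P - P ∈ J ^ (s+1) := by
    intro s
    induction s with
    | zero => intro P _; simpa using h1 P
    | succ s ih =>
      intro P hP
      rw [pow_succ] at hP
      refine Submodule.mul_induction_on (C := fun P => β P - P ∈ J ^ (s+1+1)) hP ?_ ?_
      · intro p hp j hj
        have e1 : (β p - p) * β j ∈ J ^ (s+1+1) := by
          rw [pow_succ]; exact Ideal.mul_mem_mul (ih p hp) (h2 j hj).2
        have e2 : p * (β j - j) ∈ J ^ (s+1+1) := by
          rw [show s + 1 + 1 = s + 2 from rfl, pow_add]; exact Ideal.mul_mem_mul hp (h2 j hj).1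
        have := Ideal.add_mem _ e1 e2
        rw [map_mul]
        convert this using 1
        ring
      · intro x y hx hy
        have := Ideal.add_mem _ hx hy
        rw [map_add]
        convert this using 1
        ring
  have hJt : J ≠ ⊤ := by
    intro h
    have h4 : J ≤ RingHom.ker (constantCoeff (R := K) (σ := G ⊕ H)) := by
      rw [hJ, Ideal.span_le]
      rintro _ ⟨g, rfl⟩
      change constantCoeff (X (Sum.inl g)) = 0
      simp
    rw [h] at h4
    have : constantCoeff (1 : MvPolynomial (G ⊕ H) K) = 0 := h4 trivial
    simp at this
  have hker : ∀ P, β P = 0 → P = 0 := by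
    intro P hP
    have h5 : ∀ s, P ∈ J ^ s := by
      intro s
      induction s with
      | zero => simp
      | succ s ih =>
        have := h3 s P ih
        rw [hP, zero_sub] at this
        exact (Ideal.neg_mem_iff _).mp this
    have h6 : P ∈ ⨅ s : ℕ, J ^ s := by
      rw [Ideal.mem_iInf]; exact h5
    rw [Ideal.iInf_pow_eq_bot_of_isDomain _ hJt] at h6
    exact h6
  exact (injective_iff_map_eq_zero β).mpr hker

/-- substitution -/
def th {Q : Type*} [CommRing Q] {q : ℕ} (a b : Fin q → Q) (j : Fin (q+1+1)) : MvPolynomial (Fin (q+1+1)) Q :=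
  C ((Fin.cons 1 (Fin.cons 0 a : Fin (q+1) → Q) : Fin (q+1+1) → Q) j) * X 0 +
    C ((Fin.cons 0 (Fin.cons 1 b : Fin (q+1) → Q) : Fin (q+1+1) → Q) j) * X 1

/-- forms vanishing on the line -/
def Pf {Q : Type*} [CommRing Q] {q n : ℕ} {d : Fin n → ℕ} (a b : Fin q → Q) (c : Idx (q+1) d → Q) (i : Fin n) :
    MvPolynomial (Fin (q+1+1)) Q := form c i - bind₁ (th a b) (form c i)

/-- coefficients -/
def yC {Q : Type*} [CommRing Q] {q n : ℕ} {d : Fin n → ℕ} (a b : Fin q → Q) (c : Idx (q+1) d → Q)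
    (j : Idx (q+1) d) : Q := coeff j.2.1 (Pf a b c j.1)

theorem th_hom {Q : Type*} [CommRing Q] {q : ℕ} (a b : Fin q → Q) (j) : (th a b j).IsHomogeneous 1 := by
  have h : ∀ (x : Q) (i : Fin (q+1+1)), (C x * X i : MvPolynomial (Fin (q+1+1)) Q).IsHomogeneous 1 := by
    intro x i
    have := (isHomogeneous_C (Fin (q+1+1)) x).mul (isHomogeneous_X Q i)
    simpa using this
  exact (h _ _).add (h _ _)

theorem form_yC {Q : Type*} [CommRing Q] {q n : ℕ} {d : Fin n → ℕ} (a b : Fin q → Q)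
    (c : Idx (q+1) d → Q) (i) : form (yC a b c) i = Pf a b c i := by
  refine form_unique _ _ _ ?_ fun _ => rfl
  refine (form_hom c i).sub ?_
  have := (form_hom c i).aeval (S := Q) (n := 1) (th a b) (th_hom a b)
  simpa using this

theorem map_th {Q Q' : Type*} [CommRing Q] [CommRing Q'] (f : Q →+* Q') {q : ℕ} (a b : Fin q → Q) (j) :
    map f (th a b j) = th (fun k => f (a k)) (fun k => f (b k)) j := by
  simp only [th, map_add, map_mul, map_C, map_X]
  refine Fin.cases ?_ (fun j => ?_) j
  · simp
  · refine Fin.cases ?_ (fun j => ?_) j <;> simp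

theorem map_yC {Q Q' : Type*} [CommRing Q] [CommRing Q'] (f : Q →+* Q') {q n : ℕ} {d : Fin n → ℕ} (a b : Fin q → Q)
    (c : Idx (q+1) d → Q) (j) : f (yC a b c j) = yC (fun k => f (a k)) (fun k => f (b k)) (fun k => f (c k)) j := by
  simp only [yC, ← coeff_map]
  congr 1
  simp only [Pf, map_sub, map_bind₁, map_form, map_th]

theorem coeff_good {Q : Type*} [CommRing Q] {q : ℕ} (a b : Fin q → Q)
    (p : MvPolynomial (Fin (q+1+1)) Q) (m : Fin (q+1+1) →₀ ℕ) (k : Fin q) (hm : m k.succ.succ ≠ 0) :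
    coeff m (bind₁ (th a b) p) = 0 := by
  have h0 : ∀ j, th a b j ∈ supported Q ({0, 1} : Set (Fin (q+1+1))) := by
    intro j
    have hC : ∀ x : Q, (C x : MvPolynomial (Fin (q+1+1)) Q) ∈ supported Q ({0, 1} : Set (Fin (q+1+1))) :=
      fun x => Subalgebra.algebraMap_mem _ x
    refine Subalgebra.add_mem _ (Subalgebra.mul_mem _ (hC _) ?_) (Subalgebra.mul_mem _ (hC _) ?_)
    · exact Algebra.subset_adjoin ⟨0, by simp, rfl⟩
    · exact Algebra.subset_adjoin ⟨1, by simp, rfl⟩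
  have h : bind₁ (th a b) p ∈ supported Q ({0, 1} : Set (Fin (q+1+1))) := by
    have h2 : aeval (th a b) p = ((aeval (fun j => (⟨_, h0 j⟩ : supported Q ({0, 1} : Set (Fin (q+1+1))))) p : supported Q _) : MvPolynomial (Fin (q+1+1)) Q) := by
      have h4 := comp_aeval (fun j => (⟨_, h0 j⟩ : supported Q ({0, 1} : Set (Fin (q+1+1))))) (supported Q ({0, 1} : Set (Fin (q+1+1)))).val
      exact (DFunLike.congr_fun h4 p).symm
    change aeval (th a b) p ∈ _
    rw [h2]
    exact Subtype.mem _
  by_contra hc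
  rw [mem_supported] at h
  have h5 : k.succ.succ ∈ ((bind₁ (th a b) p).vars : Set (Fin (q+1+1))) :=
    (mem_vars_iff_mem_support _).mpr ⟨m, mem_support_iff.mpr hc, Finsupp.mem_support_iff.mpr hm⟩
  have h6 := h h5
  simp [Fin.ext_iff] at h6

theorem yC_line {E : Type*} [Field E] {q n : ℕ} {d : Fin n → ℕ} (a b : Fin q → E) (c : Idx (q+1) d → E) :
    OnLine (fun i => form (yC a b c) i) := by
  refine ⟨Fin.cons 1 (Fin.cons 0 a : Fin (q+1) → E), Fin.cons 0 (Fin.cons 1 b : Fin (q+1) → E), ?_, fun i s t => ?_⟩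
  · rw [LinearIndependent.pair_iff]
    intro s t hst
    have e1 := congrFun hst 0
    have e2 := congrFun hst 1
    have h1 : (1 : Fin (q+1+1)) = Fin.succ 0 := rfl
    rw [h1] at e2
    simp at e1 e2
    exact ⟨e1, e2⟩
  · simp only [form_yC, Pf, map_sub]
    rw [← aeval_eq_eval, aeval_bind₁, sub_eq_zero]
    congr 2
    funext j
    have h1 : (1 : Fin (q+1+1)) = Fin.succ 0 := rfl
    simp only [th, map_add, map_mul, aeval_X, h1, Fin.cons_zero, Fin.cons_succ, aeval_C]
    simp
    ring

/-- base point coefficient -/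
def c0 {q n : ℕ} {d : Fin n → ℕ} (g : Idx (q+1) d) : ℕ := by
  classical
  exact if ∃ k : Fin q, k.val = g.1.val ∧ g.2.1 = Finsupp.single 0 (d g.1 - 1) + Finsupp.single k.succ.succ 1
    then 1 else 0

theorem yC_base {Q : Type*} [CommRing Q] {q n : ℕ} {d : Fin n → ℕ} (hd : ∀ i, 1 ≤ d i) (hq : q ≤ n)
    (a b : Fin q → Q) (k : Fin q) :
    yC a b (fun g : Idx (q+1) d => (c0 g : Q)) ⟨k.castLE hq, ⟨Finsupp.single 0 (d (k.castLE hq)), by simp⟩⟩ = - a k ∧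
    yC a b (fun g : Idx (q+1) d => (c0 g : Q)) ⟨k.castLE hq, ⟨Finsupp.single 0 (d (k.castLE hq) - 1) + Finsupp.single 1 1,
      by have := hd (k.castLE hq); rw [map_add, Finsupp.degree_single, Finsupp.degree_single]; omega⟩⟩ = - b k := by
  classical
  set i := k.castLE hq with hi
  obtain ⟨e, he⟩ : ∃ e, d i = e + 1 := ⟨d i - 1, by have := hd i; omega⟩
  have h1 : form (fun g : Idx (q+1) d => (c0 g : Q)) i = monomial (Finsupp.single 0 (d i - 1) + Finsupp.single k.succ.succ 1) 1 := by
    apply form_unique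
    · apply isHomogeneous_monomial
      rw [map_add, Finsupp.degree_single, Finsupp.degree_single]; omega
    · intro m
      rw [coeff_monomial, c0]
      simp only [Nat.cast_ite, Nat.cast_one, Nat.cast_zero]
      refine if_congr ?_ rfl rfl
      constructor
      · intro h; exact ⟨k, rfl, h.symm⟩
      · rintro ⟨k', h, h'⟩
        have : k' = k := Fin.ext (by rw [h]; rfl)
        subst this
        exact h'.symm
  have h2 : bind₁ (th a b) (monomial (Finsupp.single 0 (d i - 1) + Finsupp.single k.succ.succ 1) 1) =
      monomial (Finsupp.single 0 (d i)) (a k) + monomial (Finsupp.single 0 (d i - 1) + Finsupp.single 1 1) (b k) := by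
    rw [he, Nat.add_sub_cancel]
    have e0 : th a b 0 = X 0 := by simp [th]
    have e1 : th a b k.succ.succ = C (a k) * X 0 + C (b k) * X 1 := by simp [th]
    have e2 : (monomial (Finsupp.single 0 e + Finsupp.single k.succ.succ 1) (1:Q)) = X 0 ^ e * X k.succ.succ := by
      rw [X_pow_eq_monomial, X, monomial_mul]; simp
    rw [e2, map_mul, map_pow, bind₁_X_right, bind₁_X_right, e0, e1]
    rw [X_pow_eq_monomial, X, X, C_mul_monomial, C_mul_monomial, mul_add, monomial_mul, monomial_mul, ← Finsupp.single_add]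
    simp
  change coeff (Finsupp.single 0 (d i)) (form (fun g : Idx (q+1) d => (c0 g : Q)) i - bind₁ (th a b) (form (fun g : Idx (q+1) d => (c0 g : Q)) i)) = _ ∧
    coeff (Finsupp.single 0 (d i - 1) + Finsupp.single 1 1) (form (fun g : Idx (q+1) d => (c0 g : Q)) i - bind₁ (th a b) (form (fun g : Idx (q+1) d => (c0 g : Q)) i)) = _
  rw [h1, h2]
  have n1 : (Finsupp.single 0 (d i - 1) + Finsupp.single k.succ.succ 1 : Fin (q+1+1) →₀ ℕ) ≠ Finsupp.single 0 (d i) := by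
    intro h
    have := DFunLike.congr_fun h k.succ.succ
    simp [Finsupp.single_apply, Fin.ext_iff] at this
  have n2 : (Finsupp.single 0 (d i - 1) + Finsupp.single k.succ.succ 1 : Fin (q+1+1) →₀ ℕ) ≠ Finsupp.single 0 (d i - 1) + Finsupp.single 1 1 := by
    intro h
    have := DFunLike.congr_fun h k.succ.succ
    simp [Finsupp.single_apply, Fin.ext_iff] at this
  have n3 : (Finsupp.single 0 (d i - 1) + Finsupp.single 1 1 : Fin (q+1+1) →₀ ℕ) ≠ Finsupp.single 0 (d i) := by
    intro h
    have := DFunLike.congr_fun h 1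
    simp [Finsupp.single_apply, Fin.ext_iff] at this
  simp only [coeff_sub, coeff_add, coeff_monomial, if_neg n1, if_neg n2, if_neg n3, if_neg n3.symm, if_true]
  simp

end
end TL

namespace TL
noncomputable section
open MvPolynomial TopologicalSpace

/-- monomials in the first two variables -/
def Bad {q n : ℕ} {d : Fin n → ℕ} (g : Idx (q+1) d) : Prop := ∀ k : Fin q, g.2.1 k.succ.succ = 0

theorem card_bad {q n : ℕ} (d : Fin n → ℕ) :
    Nat.card {g : Idx (q+1) d // Bad g} ≤ ∑ j, (d j + 1) := by
  have h : ∑ j, (d j + 1) = Nat.card (Σ j, Fin (d j + 1)) := by simp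
  rw [h]
  have hle : ∀ g : Idx (q+1) d, g.2.1 0 < d g.1 + 1 := by
    rintro ⟨i, m, hm⟩
    have := Finsupp.le_degree (0 : Fin (q+1+1)) m
    simp only
    omega
  have hsum : ∀ g : Idx (q+1) d, Bad g → g.2.1 0 + g.2.1 1 = d g.1 := by
    intro g hg
    have h1 := g.2.2
    rw [Finsupp.degree_eq_sum, Fin.sum_univ_succ, Fin.sum_univ_succ] at h1
    rw [Finset.sum_eq_zero (fun k _ => hg k)] at h1
    exact h1
  refine Nat.card_le_card_of_injective (fun g => (⟨g.1.1, ⟨g.1.2.1 0, hle g.1⟩⟩ : Σ j, Fin (d j + 1))) ?_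
  rintro ⟨⟨i, m⟩, hm⟩ ⟨⟨i', m'⟩, hm'⟩ h
  simp only [Sigma.mk.injEq] at h
  obtain ⟨rfl, h⟩ := h
  have h0 : m.1 0 = m'.1 0 := by simpa using h
  have e1 := hsum _ hm
  have e2 := hsum _ hm'
  simp only at e1 e2
  have h1 : m.1 1 = m'.1 1 := by omega
  have : m = m' := by
    apply Subtype.ext
    ext j
    refine Fin.cases h0 (fun j => ?_) j
    refine Fin.cases h1 (fun j => ?_) j
    rw [show m.1 j.succ.succ = 0 from hm j, show m'.1 j.succ.succ = 0 from hm' j]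
  subst this
  rfl

/-- variables -/
abbrev VV {q n : ℕ} (d : Fin n → ℕ) : Type := {g : Idx (q+1) d // ¬ Bad g} ⊕ (Fin q ⊕ Fin q)

/-- the chart coefficients -/
def cc (K : Type*) [Field K] {q n : ℕ} {d : Fin n → ℕ} (g : Idx (q+1) d) : MvPolynomial (VV (q := q) d) K := by
  classical
  exact if h : Bad g then 0 else (c0 g : MvPolynomial (VV (q := q) d) K) + X (Sum.inl ⟨g, h⟩)

/-- the chart point -/
def yy (K : Type*) [Field K] {q n : ℕ} (d : Fin n → ℕ) : Idx (q+1) d → MvPolynomial (VV (q := q) d) K :=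
  yC (fun k => - X (Sum.inr (Sum.inl k))) (fun k => - X (Sum.inr (Sum.inr k))) (cc K)

theorem yy_good (K : Type*) [Field K] {q n : ℕ} (d : Fin n → ℕ) (g : Idx (q+1) d) (h : ¬ Bad g) :
    yy K d g = (c0 g : MvPolynomial (VV (q := q) d) K) + X (Sum.inl ⟨g, h⟩) := by
  have h' := h
  simp only [Bad, not_forall] at h'
  obtain ⟨k, hk⟩ := h'
  rw [yy, yC, Pf, coeff_sub, coeff_good _ _ _ _ k hk, sub_zero]
  rw [show coeff g.2.1 (form (cc K) g.1) = cc K g from coeff_form _ g.1 g.2, cc, dif_neg h]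

theorem c0_bad {q n : ℕ} {d : Fin n → ℕ} (g : Idx (q+1) d) (h : Bad g) : c0 g = 0 := by
  rw [c0, if_neg]
  rintro ⟨k, -, h2⟩
  have := h k
  rw [h2] at this
  simp at this

theorem yy_map (K : Type*) [Field K] {q n : ℕ} {d : Fin n → ℕ} {Q : Type*} [CommRing Q]
    (f : MvPolynomial (VV (q := q) d) K →+* Q) (hf : ∀ g, f (X (Sum.inl g)) = 0) (j) :
    f (yy K d j) = yC (fun k => - f (X (Sum.inr (Sum.inl k)))) (fun k => - f (X (Sum.inr (Sum.inr k))))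
      (fun g => (c0 g : Q)) j := by
  rw [yy, map_yC]
  simp only [map_neg]
  congr 1
  funext g
  rw [cc]
  split_ifs with h
  · rw [map_zero, c0_bad g h, Nat.cast_zero]
  · rw [map_add, hf, map_natCast, add_zero]

/-- coordinates of the special monomials -/
def sp {q n : ℕ} {d : Fin n → ℕ} (hd : ∀ i, 1 ≤ d i) (hq : q ≤ n) : Fin q ⊕ Fin q → Idx (q+1) d :=
  Sum.elim (fun k => ⟨k.castLE hq, ⟨Finsupp.single 0 (d (k.castLE hq)), by simp⟩⟩)
    (fun k => ⟨k.castLE hq, ⟨Finsupp.single 0 (d (k.castLE hq) - 1) + Finsupp.single 1 1,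
      by have := hd (k.castLE hq); rw [map_add, Finsupp.degree_single, Finsupp.degree_single]; omega⟩⟩)

/-- the independent functions -/
def zz (K : Type*) [Field K] {q n : ℕ} {d : Fin n → ℕ} (hd : ∀ i, 1 ≤ d i) (hq : q ≤ n) :
    VV (q := q) d → MvPolynomial (Idx (q+1) d) K :=
  Sum.elim (fun g => X g.1 - (c0 g.1 : MvPolynomial (Idx (q+1) d) K)) (fun k => X (sp hd hq k))

theorem zz_ind (K : Type*) [Field K] {q n : ℕ} {d : Fin n → ℕ} (hd : ∀ i, 1 ≤ d i) (hq : q ≤ n) :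
    AlgebraicIndependent K (fun v => aeval (yy K d) (zz K hd hq v)) := by
  apply lemJ
  · intro g
    simp [zz, yy_good K d g.1 g.2]
  · intro k
    set J := Ideal.span (Set.range fun g : {g : Idx (q+1) d // ¬ Bad g} => (X (Sum.inl g) : MvPolynomial (VV (q := q) d) K))
    have hf : ∀ g, (Ideal.Quotient.mk J) (X (Sum.inl g)) = 0 := fun g =>
      Ideal.Quotient.eq_zero_iff_mem.mpr (Ideal.subset_span ⟨g, rfl⟩)
    apply Ideal.Quotient.eq.mp
    simp only [zz, Sum.elim_inr, aeval_X]
    rw [yy_map K _ hf]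
    rcases k with k | k
    · exact (yC_base hd hq _ _ k).1.trans (neg_neg _)
    · exact (yC_base hd hq _ _ k).2.trans (neg_neg _)

theorem yy_kill (K : Type*) [Field K] [Infinite K] {q n : ℕ} {d : Fin n → ℕ} (hd : ∀ i, 1 ≤ d i)
    (p : MvPolynomial (Idx (q+1) d) K)
    (hp : p ∈ Iof (K := K) (crd K (q+1) n d).toEquiv (LL K (q+1) n d)) : aeval (yy K d) p = 0 := by
  let R := MvPolynomial (VV (q := q) d) K
  let E := FractionRing R
  have h1 := transfer (E := E) hd (by omega) p hp (fun j => algebraMap R E (yy K d j)) (by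
    have : (fun j => algebraMap R E (yy K d j)) = yC _ _ _ := funext fun j => map_yC (algebraMap R E) _ _ _ j
    rw [this]
    exact yC_line _ _ _)
  have h2 := DFunLike.congr_fun (comp_aeval (yy K d) (IsScalarTower.toAlgHom K R E)) p
  apply IsFractionRing.injective R E
  rw [map_zero, ← h1]
  exact h2

theorem LL_dim_aux {K A R V : Type*} [Field K] [CommRing A] [Algebra K A] [Algebra.FiniteType K A]
    [CommRing R] [Algebra K R] [Finite V]
    (I : Ideal A) [I.IsPrime] (f : A →ₐ[K] R) (hf : ∀ p ∈ I, f p = 0) (z : V → A)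
    (hz : AlgebraicIndependent K (fun v => f (z v))) : (Nat.card V : WithBot ℕ∞) ≤ ringKrullDim (A ⧸ I) := by
  let g : (A ⧸ I) →ₐ[K] R := Ideal.Quotient.liftₐ I f hf
  have h1 : AlgebraicIndependent K (fun v => Ideal.Quotient.mk I (z v)) :=
    AlgebraicIndependent.of_comp g hz
  exact card_le_dim _ (h1.comp (Finite.equivFin V).symm (Finite.equivFin V).symm.injective)

theorem LL_dim (K : Type*) [Field K] [IsAlgClosed K] {q n : ℕ} {d : Fin n → ℕ} (hd : ∀ i, 1 ≤ d i) (hq : q ≤ n) :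
    ∃ M : ℕ, ∑ j, Fintype.card (Mon (q+1) (d j)) + 2 * q ≤ M + ∑ j, (d j + 1) ∧
      (M : WithBot ℕ∞) ≤ dimSet (LL K (q+1) n d) := by
  classical
  have : Infinite K := IsAlgClosed.instInfinite
  refine ⟨Nat.card (VV (q := q) d), ?_, ?_⟩
  · have h1 := card_bad (q := q) d
    have h2 : Nat.card (VV (q := q) d) = Nat.card {g : Idx (q+1) d // ¬ Bad g} + 2 * q := by
      rw [Nat.card_sum, Nat.card_sum]; simp; omega
    have h3 : Nat.card {g : Idx (q+1) d // Bad g} + Nat.card {g : Idx (q+1) d // ¬ Bad g} =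
        ∑ j, Fintype.card (Mon (q+1) (d j)) := by
      rw [← Nat.card_sum, Nat.card_congr (Equiv.sumCompl (fun g : Idx (q+1) d => Bad g))]
      simp
    omega
  · have hP := LL_prime (K := K) (n := n) (r := q+1) hd (by omega)
    refine le_trans ?_ (dim_ge (isCoord K (q+1) n d) (LL K (q+1) n d) LL_closed)
    exact LL_dim_aux _ (aeval (yy K d)) (fun p hp => yy_kill K hd p hp) (zz K hd hq) (zz_ind K hd hq)

end
end TL

namespace TL
noncomputable section
open MvPolynomial TopologicalSpace

theorem comp_not_sub {M : Type*} [TopologicalSpace M] [NoetherianSpace M] (Z D : Set M) (C : Set M)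
    (hC : Maximal (fun t => t ⊆ closure (Z \ D) ∧ IsIrreducible t) C) : ¬ C ⊆ D := by
  intro hCD
  obtain ⟨S, hSf, hSc, hSi, hS⟩ := NoetherianSpace.exists_finite_set_isClosed_irreducible
    (isClosed_closure (s := Z \ D))
  have h1 : Z \ D ⊆ ⋃₀ {t ∈ S | ¬ t ⊆ D} := by
    intro x hx
    have h2 : x ∈ ⋃₀ S := hS ▸ subset_closure hx
    obtain ⟨t, ht, hxt⟩ := h2
    exact ⟨t, ⟨ht, fun h => hx.2 (h hxt)⟩, hxt⟩
  have hf : {t ∈ S | ¬ t ⊆ D}.Finite := hSf.subset (Set.sep_subset _ _)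
  have h3 : closure (Z \ D) ⊆ ⋃₀ {t ∈ S | ¬ t ⊆ D} :=
    closure_minimal h1 (by rw [Set.sUnion_eq_biUnion]; exact hf.isClosed_biUnion fun t ht => hSc t ht.1)
  obtain ⟨t, ht, hCt⟩ := (isIrreducible_iff_sUnion_isClosed.mp hC.1.2) hf.toFinset
    (fun t ht => hSc t (hf.mem_toFinset.mp ht).1) (by
      rw [hf.coe_toFinset]; exact hC.1.1.trans h3)
  have ht' := hf.mem_toFinset.mp ht
  have h4 : t ⊆ C := hC.2 ⟨by rw [hS]; exact Set.subset_sUnion_of_mem ht'.1, hSi t ht'.1⟩ hCt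
  exact ht'.2 (h4.trans hCD)

theorem final {K : Type*} [Field K] [IsAlgClosed K] {r n : ℕ} {d : Fin (n+1) → ℕ}
    (hd : ∀ i, 1 ≤ d i) (hD : ∀ i, d i ≤ d (Fin.last n)) (hr : 2 ≤ r) (hn : r ≤ n + 1) :
    Maximal (fun t => t ⊆ closure (ZZ K r n d \ DD K r n d) ∧ IsIrreducible t) (LL K r (n+1) d) ∧
      ∀ C : Set (tupleSpace K r (n+1) d),
        Maximal (fun t => t ⊆ closure (ZZ K r n d \ DD K r n d) ∧ IsIrreducible t) C →
          C ≠ LL K r (n+1) d → dimSet C < dimSet (LL K r (n+1) d) := by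
  obtain ⟨q, rfl⟩ : ∃ q, r = q + 1 := ⟨r - 1, by omega⟩
  have := noeth (isCoord K (q+1) (n+1) d)
  obtain ⟨M, hM1, hM2⟩ := LL_dim K (q := q) hd (by omega)
  have hZc : IsClosed (ZZ K (q+1) n d) := notPH_closed (id : Fin (n+1) → Fin (n+1))
  have hDc : IsClosed (DD K (q+1) n d) := notPH_closed (Fin.castSucc : Fin n → Fin (n+1))
  have hcl : closure (ZZ K (q+1) n d \ DD K (q+1) n d) ⊆ ZZ K (q+1) n d :=
    closure_minimal Set.diff_subset hZc
  have hLi := LL_irred (K := K) (n := n+1) (r := q+1) hd (by omega)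
  have hLD := LL_not_DD (K := K) hd (by omega) hn
  have hLcl : LL K (q+1) (n+1) d ⊆ closure (ZZ K (q+1) n d \ DD K (q+1) n d) := by
    have h1 : LL K (q+1) (n+1) d ⊆ closure (LL K (q+1) (n+1) d \ DD K (q+1) n d) := by
      rcases (isPreirreducible_iff_isClosed_union_isClosed.mp hLi.2)
        (DD K (q+1) n d) (closure (LL K (q+1) (n+1) d \ DD K (q+1) n d)) hDc isClosed_closure (by
          intro x hx
          by_cases h : x ∈ DD K (q+1) n d
          · exact Or.inl h
          · exact Or.inr (subset_closure ⟨hx, h⟩)) with h | h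
      · exact absurd h hLD
      · exact h
    exact h1.trans (closure_mono (Set.diff_subset_diff_left LL_sub_ZZ))
  have key : ∀ T : Set (tupleSpace K (q+1) (n+1) d), IsIrreducible T →
      T ⊆ closure (ZZ K (q+1) n d \ DD K (q+1) n d) → ¬ T ⊆ DD K (q+1) n d →
      T ⊆ LL K (q+1) (n+1) d ∨ dimSet T < dimSet (LL K (q+1) (n+1) d) := by
    intro T hT hTZ hTD
    rcases main_prop hd hD (by omega) hn (closure T) isClosed_closure hT.closure
      ((closure_minimal hTZ isClosed_closure).trans hcl) (fun h => hTD (subset_closure.trans h)) with h | ⟨b, hb, hb2⟩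
    · exact Or.inl (subset_closure.trans h)
    · right
      have h1 : dimSet T ≤ b := (dimSet_mono (by rw [closure_closure])).trans hb
      refine lt_of_le_of_lt h1 (lt_of_lt_of_le ?_ hM2)
      have : b < M := by simp only [Nat.add_sub_cancel] at hb2; omega
      exact_mod_cast this
  refine ⟨⟨⟨hLcl, hLi⟩, fun t ht hLt => ?_⟩, fun C hC hne => ?_⟩
  · rcases key t ht.2 ht.1 (fun h => hLD (hLt.trans h)) with h | h
    · exact h
    · exact absurd (dimSet_mono (closure_mono hLt)) (not_le.mpr h)
  · rcases key C hC.1.2 hC.1.1 (comp_not_sub _ _ C hC) with h | h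
    · exact absurd (Set.Subset.antisymm h (hC.2 ⟨hLcl, hLi⟩ h)) hne
    · exact h

theorem final' {K : Type*} [Field K] [IsAlgClosed K] {r n N : ℕ} (hN : N = n + 1) (hnN : n ≤ N) {d : Fin N → ℕ}
    (hd : ∀ i, 1 ≤ d i) (hmono : Monotone d) (hr : 2 ≤ r) (hn : r ≤ N)
    (Z D L : Set (tupleSpace K r N d))
    (hZ : Z = {F | vdimGE r N
      (fun i => (F i : MvPolynomial (Fin (r + 1)) K)) 1})
    (hD : D = {F | vdimGE r n
      (fun i : Fin n =>
        (F (Fin.castLE hnN i) : MvPolynomial (Fin (r + 1)) K)) 2})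
    (hL : L = {F | vanishOnCommonLine K F}) :
    Maximal (fun t => t ⊆ closure (Z \ D) ∧ IsIrreducible t) L ∧
      ∀ C : Set (tupleSpace K r N d),
        Maximal (fun t => t ⊆ closure (Z \ D) ∧ IsIrreducible t) C → C ≠ L →
          dimSet C < dimSet L := by
  subst hN
  have h1 : Z = ZZ K r n d := by
    rw [hZ]
    ext F
    have := PH_iff id F 1
    simp only [ZZ, Set.mem_setOf_eq, this, not_not]
    rfl
  have h2 : D = DD K r n d := by
    rw [hD]
    ext F
    have := PH_iff Fin.castSucc F 2
    simp only [DD, Set.mem_setOf_eq, this, not_not]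
    rfl
  have h3 : L = LL K r (n+1) d := hL
  rw [h1, h2, h3]
  exact final hd (fun i => hmono (Fin.le_last i)) hr hn

end
end TL

noncomputable section Statement1

open MvPolynomial

variable (K : Type*) [Field K]

/-- For `r ≥ 2`, `a ≥ 1`, and degrees `1 ≤ d 0 ≤ ⋯ ≤ d (r+a-2)`, let `Z` be
the locus of `(r+a-1)`-tuples `(F_1, …, F_{r+a-1})` with `dim V(F_1, …, F_{r+a-1}) ≥ 1`, let
`D` be the locus where `dim V(F_1, …, F_{r+a-2}) ≥ 2`, and let `L` be the locus of tuples
vanishing on a common line. Then the Zariski closure of `Z \ D` has a unique irreducible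
component of maximal dimension, and this component equals `L`. -/
theorem statement1 [IsAlgClosed K] (r a : ℕ) (hr : 2 ≤ r) (ha : 1 ≤ a)
    (d : Fin (r + a - 1) → ℕ) (hd1 : ∀ i, 1 ≤ d i) (hmono : Monotone d)
    (Z D L : Set (tupleSpace K r (r + a - 1) d))
    (hZ : Z = {F | vdimGE r (r + a - 1)
      (fun i => (F i : MvPolynomial (Fin (r + 1)) K)) 1})
    (hD : D = {F | vdimGE r (r + a - 2)
      (fun i : Fin (r + a - 2) =>
        (F (Fin.castLE (by omega) i) : MvPolynomial (Fin (r + 1)) K)) 2})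
    (hL : L = {F | vanishOnCommonLine K F}) :
    Maximal (fun t => t ⊆ closure (Z \ D) ∧ IsIrreducible t) L ∧
      ∀ C : Set (tupleSpace K r (r + a - 1) d),
        Maximal (fun t => t ⊆ closure (Z \ D) ∧ IsIrreducible t) C → C ≠ L →
          dimSet C < dimSet L := by
  exact TL.final' (n := r + a - 2) (by omega) (by omega) hd1 hmono hr (by omega) Z D L hZ hD hL

end Statement1
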